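/- Let Γ be a planar octilinear drawing of a simple graph G, let C be a cycle of length k ≥ 3 in G, and let σ be the number of edges of G having one endpoint on C and whose other endpoint is drawn in the interior of C in Γ. Then the edges of C carry in total at least max{0, ⌈(σ − 3k + 8)/3⌉} bends in Γ. -/

import Mathlib

/-!
Common definitions: polylines, octilinear drawings, planarity, triconnectivity.
-/

/-- A polyline: a sequence of `len + 1` points `pt 0, pt 1, …, pt len`,
consisting of `len ≥ 1` segments. (Values of `pt` beyond `len` are irrelevant.) -/
structure Polyline where
  len : ℕ
  len_pos : 1 ≤ len
  pt : ℕ → ℝ × ℝ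

namespace Polyline

/-- The number of bends of a polyline (its interior points `pt 1, …, pt (len-1)`). -/
def bends (P : Polyline) : ℕ := P.len - 1

/-- Piecewise-linear parametrization of the polyline on the interval `[0, len]`. -/
noncomputable def param (P : Polyline) (s : ℝ) : ℝ × ℝ :=
  P.pt ⌊s⌋.toNat + (s - (⌊s⌋.toNat : ℝ)) • (P.pt (⌊s⌋.toNat + 1) - P.pt ⌊s⌋.toNat)

/-- The image (trace) of the polyline in the plane. -/
noncomputable def image (P : Polyline) : Set (ℝ × ℝ) :=
  P.param '' Set.Icc 0 (P.len : ℝ)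

/-- The polyline is a simple curve. -/
def Simple (P : Polyline) : Prop :=
  Set.InjOn P.param (Set.Icc 0 (P.len : ℝ))

/-- Every segment is nondegenerate, and no two consecutive segments are collinear. -/
def Proper (P : Polyline) : Prop :=
  (∀ i < P.len, P.pt i ≠ P.pt (i + 1)) ∧
  (∀ i, i + 1 < P.len → ¬ Collinear ℝ ({P.pt i, P.pt (i + 1), P.pt (i + 2)} : Set (ℝ × ℝ)))

/-- The segment from `a` to `b` is horizontal, vertical, or diagonal at `45°`. -/
def OctiSeg (a b : ℝ × ℝ) : Prop :=
  b.2 - a.2 = 0 ∨ b.1 - a.1 = 0 ∨ b.2 - a.2 = b.1 - a.1 ∨ b.2 - a.2 = -(b.1 - a.1)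

/-- The polyline is octilinear: proper, with all segments in octilinear directions. -/
def Octilinear (P : Polyline) : Prop :=
  P.Proper ∧ ∀ i < P.len, OctiSeg (P.pt i) (P.pt (i + 1))

end Polyline

/-- Embedding of the integer grid into the real plane. -/
def toR (p : ℤ × ℤ) : ℝ × ℝ := ((p.1 : ℝ), (p.2 : ℝ))

/-- A polyline drawing of a simple graph `G` in the plane:
an injective placement of the vertices and, for each edge, a polyline whose
endpoints are the points of the edge's endvertices, with nondegenerate segments
and no two consecutive segments collinear. -/
structure PolyDrawing {V : Type*} (G : SimpleGraph V) where
  pos : V → ℝ × ℝ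
  inj : Function.Injective pos
  poly : Sym2 V → Polyline
  ends : ∀ u v, G.Adj u v →
    ({(poly s(u, v)).pt 0, (poly s(u, v)).pt (poly s(u, v)).len} : Set (ℝ × ℝ)) =
      {pos u, pos v}
  proper : ∀ e ∈ G.edgeSet, (poly e).Proper

/-- A polyline drawing is planar: every edge-polyline is a simple curve meeting the
vertex points exactly in its two endpoints, and polylines of distinct edges intersect
only in images of common endvertices. -/
def PolyDrawing.IsPlanar {V : Type*} {G : SimpleGraph V} (D : PolyDrawing G) : Prop :=
  (∀ e ∈ G.edgeSet, (D.poly e).Simple) ∧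
  (∀ u v, G.Adj u v →
    (D.poly s(u, v)).image ∩ Set.range D.pos = {D.pos u, D.pos v}) ∧
  (∀ e ∈ G.edgeSet, ∀ e' ∈ G.edgeSet, e ≠ e' →
    (D.poly e).image ∩ (D.poly e').image ⊆ D.pos '' {w | w ∈ e ∧ w ∈ e'})

/-- A simple graph is planar if it admits a planar polyline drawing in `ℝ²`. -/
def GraphPlanar {V : Type*} (G : SimpleGraph V) : Prop :=
  ∃ D : PolyDrawing G, D.IsPlanar

/-- An octilinear drawing of a simple graph `G`: vertices are placed injectively on the
integer grid and each edge is drawn as an octilinear polyline between its endvertices. -/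
structure OctiDrawing {V : Type*} (G : SimpleGraph V) where
  pos : V → ℤ × ℤ
  inj : Function.Injective pos
  poly : Sym2 V → Polyline
  ends : ∀ u v, G.Adj u v →
    ({(poly s(u, v)).pt 0, (poly s(u, v)).pt (poly s(u, v)).len} : Set (ℝ × ℝ)) =
      {toR (pos u), toR (pos v)}
  octi : ∀ e ∈ G.edgeSet, (poly e).Octilinear

/-- An octilinear drawing is planar: every edge-polyline is a simple curve meeting the
vertex points exactly in its two endpoints, and polylines of distinct edges intersect
only in images of common endvertices. -/
def OctiDrawing.IsPlanar {V : Type*} {G : SimpleGraph V} (D : OctiDrawing G) : Prop :=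
  (∀ e ∈ G.edgeSet, (D.poly e).Simple) ∧
  (∀ u v, G.Adj u v →
    (D.poly s(u, v)).image ∩ Set.range (fun w => toR (D.pos w)) =
      {toR (D.pos u), toR (D.pos v)}) ∧
  (∀ e ∈ G.edgeSet, ∀ e' ∈ G.edgeSet, e ≠ e' →
    (D.poly e).image ∩ (D.poly e').image ⊆
      (fun w => toR (D.pos w)) '' {w | w ∈ e ∧ w ∈ e'})

/-- The total number of bends of an octilinear drawing. -/
noncomputable def OctiDrawing.totalBends {V : Type*} [Fintype V] {G : SimpleGraph V}
    (D : OctiDrawing G) : ℕ :=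
  ∑ e ∈ G.edgeSet.toFinite.toFinset, (D.poly e).bends

/-- The union of the images of the polylines of a set `S` of edges. -/
noncomputable def edgesImage {V : Type*} {G : SimpleGraph V} (D : OctiDrawing G)
    (S : Set (Sym2 V)) : Set (ℝ × ℝ) :=
  ⋃ e ∈ S, (D.poly e).image

/-- The interior (in the drawing `D`) of the closed curve formed by the edges in `S`:
the union of the bounded connected components of the complement of the curve. -/
noncomputable def interiorOf {V : Type*} {G : SimpleGraph V} (D : OctiDrawing G)
    (S : Set (Sym2 V)) : Set (ℝ × ℝ) :=
  {z | z ∉ edgesImage D S ∧ Bornology.IsBounded (connectedComponentIn (edgesImage D S)ᶜ z)}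

/-- A graph is triconnected if it has at least `4` vertices and deleting
any at most `2` vertices leaves it connected. -/
def Triconnected {V : Type*} [Fintype V] (G : SimpleGraph V) : Prop :=
  4 ≤ Fintype.card V ∧ ∀ S : Set V, S.ncard ≤ 2 → (G.induce Sᶜ).Connected

/-- The maximum degree of `G` is at most `k`. -/
def MaxDegLE {V : Type*} (G : SimpleGraph V) (k : ℕ) : Prop :=
  ∀ v, (G.neighborSet v).ncard ≤ k

/-!
A cycle of length `k` with `b` bends is a simple polygon with `m = k + b` corners. Its sides are
octilinear, so its interior angles are multiples `a * π / 4`, and they sum to `(m - 2) * π`. Hence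
the numbers `a` sum to `4 * m - 8`. Each edge into the interior leaves its corner in an octilinear
direction strictly between the two sides, distinct edges at a corner in distinct directions, so a
corner with angle `a * π / 4` has at most `a - 1` of them. Therefore `σ ≤ 3 * m - 8`.

The angle sum is Hopf's proof of the Umlaufsatz: the directions of the secants of the polygon give
a potential for the turning. No Jordan curve theorem is needed, only that the right-hand side of a
positively oriented polygon is not inside: small sectors to the right of consecutive corners are
joined by thin strips along the sides, and at a leftmost corner such a sector escapes to infinity.
-/

namespace OctilinearDrawing
open Complex Filter Topology

/-! ### Angles between complex numbers -/

theorem arg_div_eq_arg_sub_arg {z w : ℂ} (hz : z ≠ 0) (hw : w ≠ 0)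
    (h : arg w - arg z ∈ Set.Ioc (-Real.pi) Real.pi) : arg (w / z) = arg w - arg z := by
  have htoReal := congrArg Real.Angle.toReal (arg_div_coe_angle hw hz)
  rwa [← Real.Angle.coe_sub, arg_coe_angle_toReal_eq_arg,
    Real.Angle.toReal_coe_eq_self_iff.2 h] at htoReal

theorem arg_div_of_re_mul_pos {u z w : ℂ} (hz : 0 < (u * z).re) (hw : 0 < (u * w).re) :
    arg (w / z) = arg (u * w) - arg (u * z) := by
  have hz0 : u * z ≠ 0 := fun h => by simp [h] at hz
  have hw0 : u * w ≠ 0 := fun h => by simp [h] at hw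
  have hz' := abs_lt.1 (abs_arg_lt_pi_div_two_iff.2 (Or.inl hz))
  have hw' := abs_lt.1 (abs_arg_lt_pi_div_two_iff.2 (Or.inl hw))
  rw [← arg_div_eq_arg_sub_arg hz0 hw0 ⟨by linarith [hz'.2, hw'.1], by linarith [hz'.1, hw'.2]⟩,
    mul_div_mul_left _ _ (left_ne_zero_of_mul hz0)]

theorem exists_re_mul_sub_pos_of_disjoint_segment {a b c d : ℂ}
    (h : Disjoint (segment ℝ a b) (segment ℝ c d)) :
    ∃ u : ℂ, ∀ x ∈ segment ℝ a b, ∀ y ∈ segment ℝ c d, 0 < (u * (y - x)).re := by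
  have isCompact_segment (x y : ℂ) : IsCompact (segment ℝ x y) := by
    rw [← convexHull_pair]
    exact (Set.toFinite {x, y}).isCompact_convexHull (𝕜 := ℝ)
  obtain ⟨f, s, t, hs, hst, ht⟩ := geometric_hahn_banach_compact_closed (convex_segment a b)
    (isCompact_segment a b) (convex_segment c d) (isCompact_segment c d).isClosed h
  have re_mul_eq (z : ℂ) : ((⟨f 1, -f I⟩ : ℂ) * z).re = f z := by
    have hz : z = z.re • (1 : ℂ) + z.im • I := by apply Complex.ext <;> simp
    conv_rhs => rw [hz, map_add, map_smul, map_smul]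
    simp only [mul_re, smul_eq_mul]
    ring
  refine ⟨⟨f 1, -f I⟩, fun x hx y hy => ?_⟩
  rw [re_mul_eq, map_sub]
  linarith [hs x hx, ht y hy]

-- All four secants lie in one open half-plane, on which `arg` (after a rotation) is additive.
theorem arg_secant_add_arg_secant_comm {a b c d : ℂ}
    (h : Disjoint (segment ℝ a b) (segment ℝ c d)) :
    arg ((d - a) / (c - a)) + arg ((d - b) / (d - a)) =
      arg ((c - b) / (c - a)) + arg ((d - b) / (c - b)) := by
  obtain ⟨u, hu⟩ := exists_re_mul_sub_pos_of_disjoint_segment h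
  have ha := left_mem_segment ℝ a b
  have hb := right_mem_segment ℝ a b
  have hc := left_mem_segment ℝ c d
  have hd := right_mem_segment ℝ c d
  rw [arg_div_of_re_mul_pos (hu a ha c hc) (hu a ha d hd),
    arg_div_of_re_mul_pos (hu a ha d hd) (hu b hb d hd),
    arg_div_of_re_mul_pos (hu a ha c hc) (hu b hb c hc),
    arg_div_of_re_mul_pos (hu b hb c hc) (hu b hb d hd)]
  ring

theorem arg_add_div_add_arg_div_add {x y : ℂ} (hx : x ≠ 0) (hy : y ≠ 0)
    (h : arg (y / x) ≠ Real.pi) :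
    arg ((x + y) / x) + arg (y / (x + y)) = arg (y / x) := by
  have hcos : 0 < Real.cos (arg (y / x) / 2) :=
    Real.cos_pos_of_mem_Ioo ⟨by linarith [neg_pi_lt_arg (y / x)],
      by linarith [lt_of_le_of_ne (arg_le_pi (y / x)) h]⟩
  -- `u` rotates the bisecting direction to the positive real axis
  set u : ℂ := exp ((-(arg (y / x) / 2) : ℝ) * I) / x with hu
  have hux : 0 < (u * x).re := by
    rw [hu, div_mul_cancel₀ _ hx, exp_ofReal_mul_I_re, Real.cos_neg]
    exact hcos
  have huy : 0 < (u * y).re := by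
    have huy_eq : u * y = ‖y / x‖ * exp ((arg (y / x) / 2 : ℝ) * I) := by
      calc u * y = exp ((-(arg (y / x) / 2) : ℝ) * I) * (y / x) := by rw [hu]; ring
        _ = exp ((-(arg (y / x) / 2) : ℝ) * I) * (‖y / x‖ * exp (arg (y / x) * I)) := by
          rw [norm_mul_exp_arg_mul_I]
        _ = ‖y / x‖ * exp ((arg (y / x) / 2 : ℝ) * I) := by
          rw [mul_left_comm, ← exp_add]
          congr 2
          push_cast
          ring
    rw [huy_eq, re_ofReal_mul, exp_ofReal_mul_I_re]
    exact mul_pos (norm_pos_iff.2 (div_ne_zero hy hx)) hcos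
  have huxy : 0 < (u * (x + y)).re := by
    rw [mul_add, add_re]
    exact add_pos hux huy
  rw [arg_div_of_re_mul_pos hux huxy, arg_div_of_re_mul_pos huxy huy, arg_div_of_re_mul_pos hux huy]
  ring

/-- The angle in `[0, 2π)` of the counterclockwise rotation from the direction of `w` to the
direction of `z`. -/
noncomputable def ccwAngle (w z : ℂ) : ℝ := toIcoMod Real.two_pi_pos 0 (arg (z / w))

theorem ccwAngle_nonneg (w z : ℂ) : 0 ≤ ccwAngle w z :=
  (toIcoMod_mem_Ico' Real.two_pi_pos _).1

theorem ccwAngle_lt_two_pi (w z : ℂ) : ccwAngle w z < 2 * Real.pi :=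
  (toIcoMod_mem_Ico' Real.two_pi_pos _).2

theorem coe_ccwAngle (w z : ℂ) : (ccwAngle w z : Real.Angle) = arg (z / w) :=
  Real.Angle.coe_toIcoMod _ _

theorem ccwAngle_eq_of_coe_eq {w z : ℂ} {θ : ℝ} (hθ : θ ∈ Set.Ico 0 (2 * Real.pi))
    (h : (θ : Real.Angle) = arg (z / w)) : ccwAngle w z = θ := by
  rw [← coe_ccwAngle, Real.Angle.angle_eq_iff_two_pi_dvd_sub] at h
  obtain ⟨k, hk⟩ := h
  refine (toIcoMod_eq_self Real.two_pi_pos (a := 0)).2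
    ⟨ccwAngle_nonneg w z, by simpa using ccwAngle_lt_two_pi w z⟩ |>.symm.trans ?_
  refine (toIcoMod_eq_iff Real.two_pi_pos).2 ⟨by simpa using hθ, -k, ?_⟩
  rw [zsmul_eq_mul]
  push_cast
  linarith

theorem eq_mul_exp_ccwAngle {w : ℂ} (hw : w ≠ 0) (z : ℂ) :
    z = (‖z‖ / ‖w‖ : ℝ) * exp (ccwAngle w z * I) * w := by
  have hexp : exp (ccwAngle w z * I) = exp (arg (z / w) * I) := by
    have := congrArg (fun θ : Real.Angle => (θ.toCircle : ℂ)) (coe_ccwAngle w z)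
    simpa using this
  rw [hexp, ← norm_div, norm_mul_exp_arg_mul_I, div_mul_cancel₀ _ hw]

theorem ccwAngle_eq {w z : ℂ} {r θ : ℝ} (hw : w ≠ 0) (hr : 0 < r)
    (hθ : θ ∈ Set.Ico 0 (2 * Real.pi)) (h : z = r * exp (θ * I) * w) : ccwAngle w z = θ := by
  refine ccwAngle_eq_of_coe_eq hθ ?_
  rw [h, mul_div_cancel_right₀ _ hw, arg_real_mul _ hr, arg_exp_mul_I, Real.Angle.coe_toIocMod]

theorem ccwAngle_eq_arg_sub_arg {w z : ℂ} (hw : w ≠ 0) (hz : z ≠ 0) (h : arg w ≤ arg z) :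
    ccwAngle w z = arg z - arg w :=
  ccwAngle_eq_of_coe_eq ⟨by linarith, by linarith [arg_le_pi z, neg_pi_lt_arg w]⟩
    (by rw [Real.Angle.coe_sub, arg_div_coe_angle hz hw])

theorem ccwAngle_real_mul_right {r : ℝ} (hr : 0 < r) (w z : ℂ) :
    ccwAngle w (r * z) = ccwAngle w z := by
  rw [ccwAngle, ccwAngle, mul_div_assoc, arg_real_mul _ hr]

theorem ccwAngle_self (w : ℂ) : ccwAngle w w = 0 := by
  rcases eq_or_ne w 0 with rfl | hw <;> simp [ccwAngle, *]

theorem arg_div_eq_pi_sub_ccwAngle {x y : ℂ} (hx : x ≠ 0) (hy : y ≠ 0) (h : 0 < ccwAngle y (-x)) :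
    arg (y / x) = Real.pi - ccwAngle y (-x) := by
  have hangle : (arg (y / x) : Real.Angle) = (Real.pi - ccwAngle y (-x) : ℝ) := by
    rw [Real.Angle.coe_sub, coe_ccwAngle, arg_div_coe_angle (neg_ne_zero.2 hx) hy,
      arg_neg_coe_angle hx, arg_div_coe_angle hy hx]
    abel
  have htoReal := congrArg Real.Angle.toReal hangle
  rwa [arg_coe_angle_toReal_eq_arg, Real.Angle.toReal_coe_eq_self_iff.2
    ⟨by linarith [ccwAngle_lt_two_pi y (-x)], by linarith⟩] at htoReal

theorem eventually_lt_ccwAngle_sub_mul_I_mul {w : ℂ} {δ θ : ℝ} (hw : w ≠ 0) (hδ : 0 < δ)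
    (hθ : θ < 2 * Real.pi) : ∀ᶠ s : ℝ in 𝓝[>] 0, θ < ccwAngle w ((δ - s * I) * w) := by
  have hcont : ContinuousAt (fun s : ℝ => arg (δ - s * I)) 0 :=
    ContinuousAt.comp (g := arg) (f := fun s : ℝ => (δ : ℂ) - s * I)
      (continuousAt_arg (by simpa using hδ)) (by fun_prop)
  have hsmall := hcont.eventually_const_lt (u := θ - 2 * Real.pi) (by
    simpa [arg_ofReal_of_nonneg hδ.le] using hθ)
  filter_upwards [nhdsWithin_le_nhds hsmall, self_mem_nhdsWithin] with s hs hpos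
  have hneg : arg (δ - s * I) < 0 := arg_neg_iff.2 (by simpa using hpos)
  rw [ccwAngle_eq_of_coe_eq (θ := arg (δ - s * I) + 2 * Real.pi)
    ⟨by linarith [neg_pi_lt_arg (δ - s * I), Real.pi_pos], by linarith⟩
    (by rw [mul_div_cancel_right₀ _ hw, Real.Angle.coe_add, Real.Angle.coe_two_pi, add_zero])]
  linarith

theorem eventually_ccwAngle_lt_ccwAngle_add_mul_I_mul {w z : ℂ} {δ : ℝ} (hw : w ≠ 0) (hz : z ≠ 0)
    (hδ : 0 < δ) : ∀ᶠ s : ℝ in 𝓝[>] 0, ccwAngle w z < ccwAngle w ((δ + s * I) * z) := by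
  have hcont : ContinuousAt (fun s : ℝ => arg (δ + s * I)) 0 :=
    ContinuousAt.comp (g := arg) (f := fun s : ℝ => (δ : ℂ) + s * I)
      (continuousAt_arg (by simpa using hδ)) (by fun_prop)
  have hsmall := hcont.eventually_lt_const (u := 2 * Real.pi - ccwAngle w z) (by
    simpa [arg_ofReal_of_nonneg hδ.le] using ccwAngle_lt_two_pi w z)
  filter_upwards [nhdsWithin_le_nhds hsmall, self_mem_nhdsWithin] with s hs hpos
  have him : 0 < (δ + s * I : ℂ).im := by simpa using hpos
  have harg : 0 < arg (δ + s * I) :=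
    (arg_nonneg_iff.2 him.le).lt_of_ne fun h => him.ne' (arg_eq_zero_iff.1 h.symm).2
  have hne : (δ + s * I : ℂ) ≠ 0 := fun h => by simp [h] at him
  rw [ccwAngle_eq_of_coe_eq (w := w) (z := (δ + s * I) * z) (θ := arg (δ + s * I) + ccwAngle w z)
    ⟨by linarith [ccwAngle_nonneg w z], by linarith⟩ (by
      rw [mul_div_assoc, arg_mul_coe_angle hne (div_ne_zero hz hw), Real.Angle.coe_add,
        coe_ccwAngle])]
  linarith

/-! ### The turning number of a system of secants -/

theorem sum_range_natCast_zmod {m : ℕ} [NeZero m] {M : Type*} [AddCommMonoid M] (f : ZMod m → M) :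
    ∑ i ∈ Finset.range m, f i = ∑ i, f i :=
  Finset.sum_bij' (fun i _ => (i : ZMod m)) (fun i _ => i.val) (by simp)
    (by simp [ZMod.val_lt]) (fun i hi => ZMod.val_cast_of_lt (Finset.mem_range.1 hi))
    (fun i _ => ZMod.natCast_zmod_val i) (fun _ _ => rfl)

theorem natCast_zmod_ne_of_lt {m i j : ℕ} (hij : i < j) (hj : j < i + m) : (i : ZMod m) ≠ j :=
  fun h => by
    rw [ZMod.natCast_eq_natCast_iff] at h
    exact Nat.not_dvd_of_pos_of_lt (by omega) (by omega) ((Nat.modEq_iff_dvd' hij.le).1 h)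

/-- Abstract changes of direction of the secants of a closed polygon: `s a b` is the change when the
secant from corner `a` to corner `b` passes to the secant from `a` to `b + 1`, and also the change
when the secant from `b` to `a` passes to the secant from `b + 1` to `a`; `τ a` is the turning angle
at `a`. The axioms say that the change around elementary squares and triangles is zero. -/
structure SecantTurning {m : ℕ} (s : ZMod m → ZMod m → ℝ) (τ : ZMod m → ℝ) : Prop where
  square : ∀ a b, a ≠ b → a + 1 ≠ b → b + 1 ≠ a → s a b + s (b + 1) a = s b a + s (a + 1) b
  triangle : ∀ a, s a (a + 1) + s (a + 1 + 1) a = τ (a + 1)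

/-- A continuous choice of the direction of the secant from the `i`-th to the `j`-th corner, for
`i < j < i + m`, normalised to be `0` on the edge from `0` to `1`. -/
def secantAngle {m : ℕ} (s : ZMod m → ZMod m → ℝ) (τ : ZMod m → ℝ) (i j : ℕ) : ℝ :=
  ∑ l ∈ Finset.range i, τ (l + 1) + ∑ l ∈ Finset.Ico (i + 1) j, s i l

namespace SecantTurning
variable {m : ℕ} {s : ZMod m → ZMod m → ℝ} {τ : ZMod m → ℝ}

theorem secantAngle_self_succ (i : ℕ) :
    secantAngle s τ i (i + 1) = ∑ l ∈ Finset.range i, τ (l + 1) := by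
  simp [secantAngle]

theorem secantAngle_succ_right {i j : ℕ} (h : i < j) :
    secantAngle s τ i (j + 1) = secantAngle s τ i j + s i j := by
  rw [secantAngle, secantAngle, Finset.sum_Ico_succ_top h, add_assoc]

theorem secantAngle_succ_left (H : SecantTurning s τ) {i j : ℕ} (hij : i + 1 < j) (hj : j < i + m) :
    secantAngle s τ (i + 1) j = secantAngle s τ i j + s j i := by
  induction j, hij using Nat.le_induction with
  | base =>
    rw [secantAngle_self_succ, secantAngle_succ_right (by omega), secantAngle_self_succ,
      Finset.sum_range_succ, add_assoc]
    push_cast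
    rw [H.triangle]
  | succ j hij ih =>
    have hsquare := H.square i j (natCast_zmod_ne_of_lt (by omega) (by omega))
      (by exact_mod_cast natCast_zmod_ne_of_lt (m := m) (i := i + 1) (j := j) hij (by omega))
      (by exact_mod_cast (natCast_zmod_ne_of_lt (m := m) (i := i) (j := j + 1) (by omega) hj).symm)
    rw [secantAngle_succ_right (by omega), secantAngle_succ_right (by omega), ih (by omega)]
    push_cast
    linarith

-- Over one period the secants from `0` become, read backwards, the secants to `m`.
theorem secantAngle_period_left (H : SecantTurning s τ) {j : ℕ} (h1 : 1 ≤ j) (hj : j < m) :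
    secantAngle s τ j m = secantAngle s τ 0 j + secantAngle s τ 1 m := by
  induction j, h1 using Nat.le_induction with
  | base => simp [secantAngle_self_succ]
  | succ j h1 ih =>
    rw [H.secantAngle_succ_left (by omega) (by omega), ih (by omega),
      secantAngle_succ_right (by omega), ZMod.natCast_self, Nat.cast_zero]
    ring

theorem sum_eq_of_zero [NeZero m] (H : SecantTurning s τ) (hm : 3 ≤ m) :
    ∑ i, τ i = 2 * (∑ l ∈ Finset.Ico 1 (m - 1), s 0 l + τ 0) := by
  obtain ⟨n, rfl⟩ : ∃ n, m = n + 1 := ⟨m - 1, by omega⟩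
  have hn : (n : ZMod (n + 1)) + 1 = 0 := by exact_mod_cast ZMod.natCast_self (n + 1)
  have hperiod : secantAngle s τ 1 (n + 1) = ∑ l ∈ Finset.Ico 1 n, s 0 l + τ 0 := by
    have htriangle := H.triangle n
    rw [hn, zero_add] at htriangle
    rw [secantAngle_succ_right (by omega), H.secantAngle_succ_left (i := 0) (by omega) (by omega),
      add_assoc, Nat.cast_zero, Nat.cast_one, htriangle]
    simp [secantAngle]
  have hlast : secantAngle s τ (n + 1) (n + 1 + 1) = 2 * secantAngle s τ 1 (n + 1) := by
    have hright : secantAngle s τ 1 (n + 1) =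
        secantAngle s τ 0 n + s n 0 + s 1 n := by
      rw [secantAngle_succ_right (by omega), H.secantAngle_succ_left (i := 0) (by omega) (by omega)]
      simp
    rw [H.secantAngle_succ_left (by omega) (by omega), secantAngle_succ_right (by omega),
      H.secantAngle_period_left (by omega) (by omega)]
    push_cast
    rw [hn, zero_add, hright]
    ring
  rw [Nat.add_sub_cancel, ← hperiod, ← hlast, secantAngle_self_succ, sum_range_natCast_zmod
    (fun i => τ (i + 1))]
  exact (Equiv.sum_comp (Equiv.addRight 1) τ).symm

theorem sum_eq [NeZero m] (H : SecantTurning s τ) (hm : 3 ≤ m) (k : ZMod m) :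
    ∑ i, τ i = 2 * (∑ l ∈ Finset.Ico 1 (m - 1), s k (k + l) + τ k) := by
  have hshift : SecantTurning (fun a b => s (k + a) (k + b)) (fun a => τ (k + a)) := by
    refine ⟨fun a b hab h1 h2 => ?_, fun a => ?_⟩
    · simpa only [add_assoc] using H.square (k + a) (k + b) (by simpa using hab)
        (by simpa [add_assoc] using h1) (by simpa [add_assoc] using h2)
    · simpa only [add_assoc] using H.triangle (k + a)
  rw [← Equiv.sum_comp (Equiv.addLeft k) τ]
  simpa using hshift.sum_eq_of_zero hm

end SecantTurning

/-! ### Simple polygons -/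

/-- The closed polygon with corners `p i` and edges from `p i` to `p (i + 1)` is simple: its
half-open edges `[p i, p (i + 1))` are nondegenerate and pairwise disjoint. Indexing the corners by
`ZMod m` makes them cyclic. -/
def IsSimplePolygon {m : ℕ} (p : ZMod m → ℂ) : Prop :=
  ∀ ⦃i j : ZMod m⦄ ⦃s t : ℝ⦄, s ∈ Set.Ico 0 1 → t ∈ Set.Ico 0 1 →
    AffineMap.lineMap (p i) (p (i + 1)) s = AffineMap.lineMap (p j) (p (j + 1)) t → i = j ∧ s = t

/-- The angle at the corner `p i` on the left of the polygon: from the outgoing edge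
counterclockwise to the incoming one. -/
noncomputable def leftAngle {m : ℕ} (p : ZMod m → ℂ) (i : ZMod m) : ℝ :=
  ccwAngle (p (i + 1) - p i) (p (i - 1) - p i)

theorem exists_forall_arg_sub_mem_Ioc {ι : Type*} [Finite ι] [Nonempty ι] (p : ι → ℂ) :
    ∃ k, ∀ i, arg (p i - p k) ∈ Set.Ioc (-(Real.pi / 2)) (Real.pi / 2) := by
  obtain ⟨k, hk⟩ := Finite.exists_min fun i => toLex ((p i).re, (p i).im)
  refine ⟨k, fun i => ?_⟩
  have hlex := Prod.Lex.le_iff.1 (hk i)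
  simp only [ofLex_toLex] at hlex
  have hre : 0 ≤ (p i - p k).re := by
    rw [sub_re]
    rcases hlex with h | h <;> linarith
  have hbounds := abs_le.1 (abs_arg_le_pi_div_two_iff.2 hre)
  refine ⟨lt_of_le_of_ne hbounds.1 fun h => ?_, hbounds.2⟩
  obtain ⟨hre0, him⟩ := arg_eq_neg_pi_div_two_iff.1 h.symm
  rw [sub_re] at hre0
  rw [sub_im] at him
  rcases hlex with h | h <;> linarith

namespace IsSimplePolygon
variable {m : ℕ} {p : ZMod m → ℂ}

theorem injective (H : IsSimplePolygon p) : Function.Injective p := fun i j h =>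
  (H (s := 0) (t := 0) (by simp) (by simp) (by simpa using h)).1

theorem succ_ne (H : IsSimplePolygon p) (i : ZMod m) : p (i + 1) ≠ p i := fun h => by
  have := (H (i := i) (j := i) (s := 0) (t := 1 / 2) (by norm_num) (by norm_num) (by simp [h])).2
  norm_num at this

theorem add_one_add_one_ne (H : IsSimplePolygon p) (i : ZMod m) : i + 1 + 1 ≠ i := fun h => by
  have := (H (i := i) (j := i + 1) (s := 1 / 2) (t := 1 / 2) (by norm_num) (by norm_num)
    (by rw [h, ← AffineMap.lineMap_apply_one_sub]; norm_num)).1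
  exact H.succ_ne i (by rw [← this])

theorem three_le [NeZero m] (H : IsSimplePolygon p) : 3 ≤ m := by
  have h0 := NeZero.ne m
  have h1 : m ≠ 1 := by
    rintro rfl
    exact H.succ_ne 0 (congrArg p (Subsingleton.elim _ _))
  have h2 : m ≠ 2 := by
    rintro rfl
    exact H.add_one_add_one_ne 0 (by decide)
  omega

theorem exists_lineMap_of_mem_segment {i : ZMod m} {z : ℂ} (hz : z ∈ segment ℝ (p i) (p (i + 1))) :
    ∃ k, ∃ t ∈ Set.Ico (0 : ℝ) 1, (k = i ∨ k = i + 1 ∧ t = 0) ∧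
      AffineMap.lineMap (p k) (p (k + 1)) t = z := by
  rw [segment_eq_image_lineMap] at hz
  obtain ⟨t, ht, rfl⟩ := hz
  rcases ht.2.lt_or_eq with h1 | rfl
  · exact ⟨i, t, ⟨ht.1, h1⟩, Or.inl rfl, rfl⟩
  · exact ⟨i + 1, 0, by simp, Or.inr ⟨rfl, rfl⟩, by simp⟩

theorem disjoint_segment (H : IsSimplePolygon p) {i j : ZMod m} (hij : i ≠ j) (h1 : i + 1 ≠ j)
    (h2 : j + 1 ≠ i) :
    Disjoint (segment ℝ (p i) (p (i + 1))) (segment ℝ (p j) (p (j + 1))) := by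
  rw [Set.disjoint_left]
  intro z hz hz'
  obtain ⟨k, s, hs, hk, hks⟩ := exists_lineMap_of_mem_segment hz
  obtain ⟨l, t, ht, hl, hlt⟩ := exists_lineMap_of_mem_segment hz'
  have hkl := (H hs ht (hks.trans hlt.symm)).1
  rcases hk with rfl | ⟨rfl, -⟩ <;> rcases hl with rfl | ⟨rfl, -⟩
  · exact hij hkl
  · exact h2 hkl.symm
  · exact h1 hkl
  · exact hij (add_right_cancel hkl)

theorem eq_or_eq_of_mem_segment (H : IsSimplePolygon p) {i j : ZMod m}
    (h : p j ∈ segment ℝ (p i) (p (i + 1))) : i = j ∨ i = j - 1 := by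
  obtain ⟨k, t, ht, hk, hkt⟩ := exists_lineMap_of_mem_segment h
  have hkj := (H (j := j) (t := 0) ht (by simp) (by simpa using hkt)).1
  rcases hk with rfl | ⟨rfl, -⟩
  · exact Or.inl hkj
  · exact Or.inr (eq_sub_of_add_eq hkj)

theorem leftAngle_pos (H : IsSimplePolygon p) (i : ZMod m) : 0 < leftAngle p i := by
  refine (ccwAngle_nonneg _ _).lt_of_ne fun h => ?_
  -- a vanishing angle makes the two edges at `p i` overlap
  have hne : p (i + 1) - p i ≠ 0 := sub_ne_zero.2 (H.succ_ne i)
  have hne' : p (i - 1) - p i ≠ 0 := by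
    have := H.succ_ne (i - 1)
    rw [sub_add_cancel] at this
    exact sub_ne_zero.2 this.symm
  have hray := eq_mul_exp_ccwAngle hne (p (i - 1) - p i)
  rw [← h, ofReal_zero, zero_mul, exp_zero, mul_one] at hray
  set r := ‖p (i - 1) - p i‖ / ‖p (i + 1) - p i‖
  have hr : 0 < r := div_pos (norm_pos_iff.2 hne') (norm_pos_iff.2 hne)
  have hmem : r / (1 + r) ∈ Set.Ico (0 : ℝ) 1 :=
    ⟨by positivity, (div_lt_one (by positivity)).2 (by linarith)⟩
  have hii := (H (i := i) (j := i - 1) hmem hmem (by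
    rw [sub_add_cancel, AffineMap.lineMap_apply, AffineMap.lineMap_apply]
    simp only [vsub_eq_sub, vadd_eq_add, real_smul]
    rw [← neg_sub (p (i - 1)) (p i), ← sub_eq_zero]
    have hr' : (1 + r : ℂ) ≠ 0 := by exact_mod_cast (by positivity : 1 + r ≠ 0)
    rw [← sub_add_cancel (p (i - 1)) (p i), add_sub_cancel_right, hray]
    push_cast
    field_simp
    ring)).1
  exact H.succ_ne (i - 1) (by rw [sub_add_cancel, ← hii])

theorem secantTurning (H : IsSimplePolygon p) :
    SecantTurning (fun a b => arg ((p (b + 1) - p a) / (p b - p a)))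
      (fun a => Real.pi - leftAngle p a) := by
  have hswap (x y z : ℂ) : (x - y) / (z - y) = (y - x) / (y - z) := by
    rw [← neg_sub y x, ← neg_sub y z, neg_div_neg_eq]
  refine ⟨fun a b hab h1 h2 => ?_, fun a => ?_⟩
  · simp only [hswap _ (p (b + 1)), hswap _ (p b)]
    exact arg_secant_add_arg_secant_comm (H.disjoint_segment hab h1 h2)
  · have hangle : leftAngle p (a + 1) =
        ccwAngle (p (a + 1 + 1) - p (a + 1)) (-(p (a + 1) - p a)) := by
      rw [leftAngle, add_sub_cancel_right, neg_sub]
    have hpos := hangle ▸ H.leftAngle_pos (a + 1)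
    have hx := sub_ne_zero.2 (H.succ_ne a)
    have hy := sub_ne_zero.2 (H.succ_ne (a + 1))
    have harg := arg_div_eq_pi_sub_ccwAngle hx hy hpos
    have hadd := arg_add_div_add_arg_div_add hx hy (by rw [harg]; linarith)
    rw [hangle, ← harg, ← hadd, hswap _ (p (a + 1 + 1))]
    congr 3 <;> ring

theorem sum_pi_sub_leftAngle [NeZero m] (H : IsSimplePolygon p) {k : ZMod m}
    (hk : ∀ i, arg (p i - p k) ∈ Set.Ioc (-(Real.pi / 2)) (Real.pi / 2))
    (hle : arg (p (k + 1) - p k) ≤ arg (p (k - 1) - p k)) :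
    ∑ i, (Real.pi - leftAngle p i) = 2 * Real.pi := by
  have hm := H.three_le
  obtain ⟨n, rfl⟩ : ∃ n, m = n + 1 := ⟨m - 1, by omega⟩
  have hn : (n : ZMod (n + 1)) = -1 := by
    rw [eq_neg_iff_add_eq_zero]
    exact_mod_cast ZMod.natCast_self (n + 1)
  have hne (l : ℕ) (h0 : 0 < l) (hl : l ≤ n) : p (k + l) - p k ≠ 0 := fun h =>
    natCast_zmod_ne_of_lt (m := n + 1) (i := 0) h0 (by omega)
      (by simpa [eq_comm] using H.injective (sub_eq_zero.1 h))
  have htelescope : ∑ l ∈ Finset.Ico 1 n, arg ((p (k + l + 1) - p k) / (p (k + l) - p k)) =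
      arg (p (k - 1) - p k) - arg (p (k + 1) - p k) := by
    calc _ = ∑ l ∈ Finset.Ico 1 n, (arg (p (k + (l + 1 : ℕ)) - p k) - arg (p (k + l) - p k)) := by
          refine Finset.sum_congr rfl fun l hl => ?_
          rw [Finset.mem_Ico] at hl
          have hsucc := hne (l + 1) (by omega) (by omega)
          rw [Nat.cast_add_one, ← add_assoc] at hsucc ⊢
          have h := hk (k + l)
          have h' := hk (k + l + 1)
          exact arg_div_eq_arg_sub_arg (hne l (by omega) (by omega)) hsucc
            ⟨by linarith [h.2, h'.1], by linarith [h.1, h'.2]⟩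
      _ = _ := by
          rw [Finset.sum_Ico_sub (fun l : ℕ => arg (p (k + l) - p k)) (by omega), hn,
            Nat.cast_one, sub_eq_add_neg k]
  have hprev : p (k - 1) - p k ≠ 0 := by
    simpa [hn, sub_eq_add_neg] using hne n (by omega) le_rfl
  have hangle : leftAngle p k = arg (p (k - 1) - p k) - arg (p (k + 1) - p k) :=
    ccwAngle_eq_arg_sub_arg (sub_ne_zero.2 (H.succ_ne k)) hprev hle
  rw [H.secantTurning.sum_eq hm k, Nat.add_sub_cancel, htelescope, hangle]
  ring

end IsSimplePolygon

/-! ### The bounded components of a complement -/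

/-- The union of the bounded components of the complement of `K`. -/
def inside {E : Type*} [TopologicalSpace E] [Bornology E] (K : Set E) : Set E :=
  {z | z ∉ K ∧ Bornology.IsBounded (connectedComponentIn Kᶜ z)}

theorem mem_inside_of_isPreconnected {E : Type*} [TopologicalSpace E] [Bornology E] {K A : Set E}
    (hA : IsPreconnected A) (hAK : Disjoint A K) {x y : E} (hx : x ∈ A) (hy : y ∈ A)
    (h : x ∈ inside K) : y ∈ inside K := by
  have hsub := Set.subset_compl_iff_disjoint_right.2 hAK
  refine ⟨hsub hy, ?_⟩
  rw [← connectedComponentIn_eq (hA.subset_connectedComponentIn hx hsub hy)]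
  exact h.2

theorem disjoint_inside_of_isPreconnected {E : Type*} [TopologicalSpace E] [Bornology E]
    {K A : Set E} (hA : IsPreconnected A) (hAK : Disjoint A K) {x : E} (hx : x ∈ A)
    (h : x ∉ inside K) : Disjoint A (inside K) :=
  Set.disjoint_left.2 fun _ hy hy' => h (mem_inside_of_isPreconnected hA hAK hy hx hy')

theorem disjoint_inside_of_not_isBounded {E : Type*} [TopologicalSpace E] [Bornology E]
    {K A : Set E} (hA : IsPreconnected A) (hAK : Disjoint A K) (h : ¬ Bornology.IsBounded A) :
    Disjoint A (inside K) :=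
  Set.disjoint_left.2 fun _ hx hx' => h <| hx'.2.subset <|
    hA.subset_connectedComponentIn hx (Set.subset_compl_iff_disjoint_right.2 hAK)

theorem image_inside_subset {E F : Type*} [NormedAddCommGroup E] [NormedSpace ℝ E]
    [NormedAddCommGroup F] [NormedSpace ℝ F] (f : E ≃L[ℝ] F) (K : Set E) :
    f '' inside K ⊆ inside (f '' K) := by
  rintro _ ⟨z, ⟨hzK, hbounded⟩, rfl⟩
  have himage : f '' connectedComponentIn Kᶜ z = connectedComponentIn (f '' K)ᶜ (f z) := by
    rw [← Set.image_compl_eq f.bijective]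
    exact f.toHomeomorph.image_connectedComponentIn hzK
  refine ⟨fun h => hzK (f.injective.mem_set_image.1 h), ?_⟩
  rw [← himage]
  exact f.toContinuousLinearMap.lipschitz.isBounded_image hbounded

/-! ### The right-hand side of a simple polygon -/

/-- The closed curve formed by the edges of a polygon. -/
def carrier {m : ℕ} (p : ZMod m → ℂ) : Set ℂ := ⋃ i, segment ℝ (p i) (p (i + 1))

theorem mem_carrier_iff {m : ℕ} {p : ZMod m → ℂ} {z : ℂ} : z ∈ carrier p ↔
    ∃ i, ∃ t ∈ Set.Ico (0 : ℝ) 1, AffineMap.lineMap (p i) (p (i + 1)) t = z := by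
  refine Set.mem_iUnion.trans ⟨fun ⟨i, hi⟩ => ?_, fun ⟨i, t, ht, h⟩ => ⟨i, ?_⟩⟩
  · obtain ⟨k, t, ht, -, h⟩ := IsSimplePolygon.exists_lineMap_of_mem_segment hi
    exact ⟨k, t, ht, h⟩
  · rw [segment_eq_image_lineMap]
    exact ⟨t, Set.Ico_subset_Icc_self ht, h⟩

/-- The points near the corner `p j` that lie on the right of the polygon, that is, in the
counterclockwise sector from the incoming to the outgoing edge. -/
def rightSector {m : ℕ} (p : ZMod m → ℂ) (j : ZMod m) (ε : ℝ) : Set ℂ :=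
  {z | z ≠ p j ∧ dist z (p j) < ε ∧ leftAngle p j < ccwAngle (p (j + 1) - p j) (z - p j)}

theorem isClosed_biUnion_segment {ι E : Type*} [Finite ι] [AddCommGroup E] [TopologicalSpace E]
    [IsTopologicalAddGroup E] [T2Space E] [Module ℝ E] [ContinuousSMul ℝ E] (p q : ι → E)
    (J : Set ι) : IsClosed (⋃ i ∈ J, segment ℝ (p i) (q i)) :=
  J.toFinite.isClosed_biUnion fun i _ => by
    rw [← convexHull_pair]
    exact (Set.toFinite _).isClosed_convexHull ℝ

namespace IsSimplePolygon
variable {m : ℕ} {p : ZMod m → ℂ}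

theorem isPreconnected_rightSector (H : IsSimplePolygon p) (j : ZMod m) (ε : ℝ) :
    IsPreconnected (rightSector p j ε) := by
  have he : p (j + 1) - p j ≠ 0 := sub_ne_zero.2 (H.succ_ne j)
  have hpolar : rightSector p j ε =
      (fun x : ℝ × ℝ => p j + x.1 * exp (x.2 * I) * (p (j + 1) - p j)) ''
        (Set.Ioo 0 (ε / ‖p (j + 1) - p j‖) ×ˢ Set.Ioo (leftAngle p j) (2 * Real.pi)) := by
    have hlen := norm_pos_iff.2 he
    ext z
    constructor
    · rintro ⟨hne, hdist, hangle⟩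
      refine ⟨(‖z - p j‖ / ‖p (j + 1) - p j‖, ccwAngle (p (j + 1) - p j) (z - p j)),
        ⟨⟨div_pos (norm_pos_iff.2 (sub_ne_zero.2 hne)) hlen, ?_⟩,
          hangle, ccwAngle_lt_two_pi _ _⟩, ?_⟩
      · rwa [div_lt_div_iff_of_pos_right hlen, ← dist_eq_norm]
      · dsimp only
        rw [← eq_mul_exp_ccwAngle he, add_sub_cancel]
    · rintro ⟨⟨ρ, φ⟩, ⟨⟨hρ0, hρε⟩, hφ, hφ2⟩, rfl⟩
      dsimp only at hρ0 hρε hφ hφ2 ⊢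
      refine ⟨?_, ?_, ?_⟩
      · simpa [he] using hρ0.ne'
      · rw [dist_self_add_left, norm_mul, norm_mul, norm_exp_ofReal_mul_I,
          Complex.norm_of_nonneg hρ0.le, mul_one]
        exact (lt_div_iff₀ hlen).1 hρε
      · rwa [add_sub_cancel_left, ccwAngle_eq he hρ0 ⟨(H.leftAngle_pos j).le.trans hφ.le, hφ2⟩ rfl]
  rw [hpolar]
  exact (isPreconnected_Ioo.prod isPreconnected_Ioo).image _ (by fun_prop)

theorem eventually_strip_start_mem_rightSector (H : IsSimplePolygon p) (j : ZMod m) {δ ε : ℝ}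
    (hδ : 0 < δ) (hε : δ * ‖p (j + 1) - p j‖ < ε) :
    ∀ᶠ s : ℝ in 𝓝[>] 0, p j + (δ - s * I) * (p (j + 1) - p j) ∈ rightSector p j ε := by
  have he : p (j + 1) - p j ≠ 0 := sub_ne_zero.2 (H.succ_ne j)
  have hopen : IsOpen (Metric.ball (p j) ε \ {p j}) := Metric.isOpen_ball.sdiff isClosed_singleton
  have hnear : ∀ᶠ s : ℝ in 𝓝 0,
      p j + (δ - s * I) * (p (j + 1) - p j) ∈ Metric.ball (p j) ε \ {p j} :=
    ContinuousAt.eventually_mem (by fun_prop) (hopen.mem_nhds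
      ⟨by simpa [abs_of_pos hδ] using hε, by simpa [he] using hδ.ne'⟩)
  filter_upwards [nhdsWithin_le_nhds hnear,
    eventually_lt_ccwAngle_sub_mul_I_mul he hδ (ccwAngle_lt_two_pi _ _)] with s hs hangle
  exact ⟨hs.2, hs.1, by rwa [add_sub_cancel_left]⟩

theorem eventually_strip_end_mem_rightSector (H : IsSimplePolygon p) (j : ZMod m) {δ ε : ℝ}
    (hδ : 0 < δ) (hε : δ * ‖p (j + 1) - p j‖ < ε) :
    ∀ᶠ s : ℝ in 𝓝[>] 0,
      p j + ((1 - δ : ℝ) - s * I) * (p (j + 1) - p j) ∈ rightSector p (j + 1) ε := by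
  have he : p j - p (j + 1) ≠ 0 := sub_ne_zero.2 (H.succ_ne j).symm
  have hpoint (s : ℝ) : p j + ((1 - δ : ℝ) - s * I) * (p (j + 1) - p j) =
      p (j + 1) + (δ + s * I) * (p j - p (j + 1)) := by
    push_cast
    ring
  have hopen : IsOpen (Metric.ball (p (j + 1)) ε \ {p (j + 1)}) :=
    Metric.isOpen_ball.sdiff isClosed_singleton
  have hnear : ∀ᶠ s : ℝ in 𝓝 0,
      p (j + 1) + (δ + s * I) * (p j - p (j + 1)) ∈ Metric.ball (p (j + 1)) ε \ {p (j + 1)} :=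
    ContinuousAt.eventually_mem (by fun_prop) (hopen.mem_nhds
      ⟨by simpa [abs_of_pos hδ, norm_sub_rev (p j)] using hε, by simpa [he] using hδ.ne'⟩)
  filter_upwards [nhdsWithin_le_nhds hnear, eventually_ccwAngle_lt_ccwAngle_add_mul_I_mul
    (sub_ne_zero.2 (H.succ_ne (j + 1))) he hδ] with s hs hangle
  rw [hpoint]
  exact ⟨hs.2, hs.1, by rwa [add_sub_cancel_left, leftAngle, add_sub_cancel_right]⟩

variable [NeZero m]

theorem exists_forall_mem_carrier_near (H : IsSimplePolygon p) (j : ZMod m) :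
    ∃ ε > 0, ∀ z ∈ carrier p, dist z (p j) < ε →
      z ∈ segment ℝ (p j) (p (j + 1)) ∨ z ∈ segment ℝ (p j) (p (j - 1)) := by
  have hclosed := isClosed_biUnion_segment p (fun i => p (i + 1)) {i | ¬ (i = j ∨ i = j - 1)}
  obtain ⟨ε, hε, hball⟩ := Metric.isOpen_iff.1 hclosed.isOpen_compl (p j) (by
    simp only [Set.mem_compl_iff, Set.mem_iUnion, not_exists]
    exact fun i hi hz => hi (H.eq_or_eq_of_mem_segment hz))
  refine ⟨ε, hε, fun z hz hd => ?_⟩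
  obtain ⟨i, hi⟩ := Set.mem_iUnion.1 hz
  by_contra hcon
  refine hball (Metric.mem_ball.2 hd) (Set.mem_biUnion (x := i) ?_ hi)
  rintro (rfl | rfl)
  · exact hcon (Or.inl hi)
  · rw [sub_add_cancel, segment_symm] at hi
    exact hcon (Or.inr hi)

theorem exists_disjoint_rightSector_carrier (H : IsSimplePolygon p) (j : ZMod m) :
    ∃ ε > 0, Disjoint (rightSector p j ε) (carrier p) := by
  obtain ⟨ε, hε, hnear⟩ := H.exists_forall_mem_carrier_near j
  refine ⟨ε, hε, Set.disjoint_left.2 ?_⟩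
  rintro z ⟨hne, hdist, hangle⟩ hz
  have ccwAngle_eq_of_mem_segment {q : ℂ} (hq : z ∈ segment ℝ (p j) q) :
      ccwAngle (p (j + 1) - p j) (z - p j) = ccwAngle (p (j + 1) - p j) (q - p j) := by
    rw [segment_eq_image'] at hq
    obtain ⟨t, ht, rfl⟩ := hq
    have ht0 : 0 < t := ht.1.lt_of_ne (by rintro rfl; simp at hne)
    rw [add_sub_cancel_left, real_smul, ccwAngle_real_mul_right ht0]
  rcases hnear z hz hdist with h | h
  · rw [ccwAngle_eq_of_mem_segment h, ccwAngle_self] at hangle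
    exact hangle.not_ge (H.leftAngle_pos j).le
  · rw [ccwAngle_eq_of_mem_segment h] at hangle
    exact lt_irrefl _ hangle

-- Only the edge itself comes near its middle part, and the strip is parallel to it.
theorem exists_strip_disjoint_carrier (H : IsSimplePolygon p) (j : ZMod m) {δ : ℝ} (hδ : 0 < δ) :
    ∃ η > (0 : ℝ), ∀ t ∈ Set.Icc δ (1 - δ), ∀ s ∈ Set.Ioo 0 η,
      p j + (t - s * I) * (p (j + 1) - p j) ∉ carrier p := by
  have he : p (j + 1) - p j ≠ 0 := sub_ne_zero.2 (H.succ_ne j)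
  have hlen := norm_pos_iff.2 he
  have hcompact : IsCompact (AffineMap.lineMap (p j) (p (j + 1)) '' Set.Icc δ (1 - δ)) :=
    isCompact_Icc.image (AffineMap.lineMap_continuous)
  have hclosed := isClosed_biUnion_segment p (fun i => p (i + 1)) {j}ᶜ
  obtain ⟨η, hη, hthick⟩ := hcompact.exists_thickening_subset_open hclosed.isOpen_compl (by
    rintro _ ⟨t, ht, rfl⟩ hz
    obtain ⟨i, hi, hz⟩ := Set.mem_iUnion₂.1 hz
    obtain ⟨k, t', ht', hk, hkt⟩ := exists_lineMap_of_mem_segment hz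
    obtain ⟨rfl, rfl⟩ := H ht' ⟨hδ.le.trans ht.1, ht.2.trans_lt (by linarith)⟩ hkt
    rcases hk with rfl | ⟨-, rfl⟩
    · exact hi rfl
    · exact hδ.not_ge ht.1)
  refine ⟨η / ‖p (j + 1) - p j‖, by positivity, fun t ht s hs hz => ?_⟩
  obtain ⟨i, hi⟩ := Set.mem_iUnion.1 hz
  rcases eq_or_ne i j with rfl | hij
  · rw [segment_eq_image'] at hi
    obtain ⟨t', -, ht'⟩ := hi
    have him := congrArg im (mul_right_cancel₀ he (add_left_cancel ht'))
    exact hs.1.ne' (by simpa using him)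
  · refine hthick (Metric.mem_thickening_iff.2 ⟨_, ⟨t, ht, rfl⟩, ?_⟩) (Set.mem_biUnion hij hi)
    rw [AffineMap.lineMap_apply, vadd_eq_add, vsub_eq_sub, add_comm _ (p j), dist_add_left,
      dist_eq_norm, real_smul, ← sub_mul, norm_mul]
    simpa [abs_of_pos hs.1] using (lt_div_iff₀ hlen).1 hs.2

-- The right-hand sectors at the two ends of an edge are joined by a thin strip along it.
theorem exists_disjoint_rightSector_inside_succ (H : IsSimplePolygon p) {j : ZMod m}
    (h : ∃ ε > 0, Disjoint (rightSector p j ε) (inside (carrier p))) :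
    ∃ ε > 0, Disjoint (rightSector p (j + 1) ε) (inside (carrier p)) := by
  obtain ⟨ε, hε, hout⟩ := h
  obtain ⟨ε', hε', hoff⟩ := H.exists_disjoint_rightSector_carrier (j + 1)
  have hlen : 0 < ‖p (j + 1) - p j‖ := norm_pos_iff.2 (sub_ne_zero.2 (H.succ_ne j))
  obtain ⟨δ, hδ, hδmin⟩ := exists_between (show 0 < min (1 / 2)
    (min (ε / ‖p (j + 1) - p j‖) (ε' / ‖p (j + 1) - p j‖)) by positivity)
  obtain ⟨hδ2, hδε, hδε'⟩ : δ < 1 / 2 ∧ δ < ε / ‖p (j + 1) - p j‖ ∧ δ < ε' / ‖p (j + 1) - p j‖ := by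
    simpa only [lt_min_iff] using hδmin
  obtain ⟨η, hη, hstrip⟩ := H.exists_strip_disjoint_carrier j hδ
  have hsmall : ∀ᶠ s : ℝ in 𝓝[>] 0, s ∈ Set.Ioo 0 η := Ioo_mem_nhdsGT hη
  obtain ⟨s, hs, hstart, hend⟩ := (hsmall.and
    ((H.eventually_strip_start_mem_rightSector j hδ ((lt_div_iff₀ hlen).1 hδε)).and
      (H.eventually_strip_end_mem_rightSector j hδ ((lt_div_iff₀ hlen).1 hδε')))).exists
  have hdisjoint := disjoint_inside_of_isPreconnected (K := carrier p)
    (A := (fun t : ℝ => p j + (t - s * I) * (p (j + 1) - p j)) '' Set.Icc δ (1 - δ))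
    (isPreconnected_Icc.image _ (by fun_prop))
    (Set.disjoint_left.2 (by rintro _ ⟨t, ht, rfl⟩; exact hstrip t ht s hs))
    ⟨δ, ⟨le_rfl, by linarith⟩, rfl⟩ (Set.disjoint_left.1 hout hstart)
  exact ⟨ε', hε', disjoint_inside_of_isPreconnected (H.isPreconnected_rightSector _ _) hoff hend
    (Set.disjoint_left.1 hdisjoint ⟨1 - δ, ⟨by linarith, le_rfl⟩, rfl⟩)⟩

-- At a leftmost corner the ray pointing west leaves through the right-hand sector.
theorem exists_disjoint_rightSector_inside_of_forall_arg (H : IsSimplePolygon p) {k : ZMod m}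
    (hk : ∀ i, arg (p i - p k) ∈ Set.Ioc (-(Real.pi / 2)) (Real.pi / 2))
    (hle : arg (p (k + 1) - p k) ≤ arg (p (k - 1) - p k)) :
    ∃ ε > 0, Disjoint (rightSector p k ε) (inside (carrier p)) := by
  obtain ⟨ε, hε, hoff⟩ := H.exists_disjoint_rightSector_carrier k
  have he : p (k + 1) - p k ≠ 0 := sub_ne_zero.2 (H.succ_ne k)
  have hf : p (k - 1) - p k ≠ 0 := sub_ne_zero.2 fun h =>
    H.succ_ne (k - 1) (by rw [sub_add_cancel, h])
  have hray : Disjoint ((fun r : ℝ => p k - (r : ℂ)) '' Set.Ioi 0) (carrier p) := by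
    have hre (i : ZMod m) : (p k).re ≤ (p i).re := by
      have := abs_arg_le_pi_div_two_iff.1 (abs_le.2 ⟨(hk i).1.le, (hk i).2⟩)
      rw [sub_re] at this
      linarith
    rw [Set.disjoint_left]
    rintro _ ⟨r, hr, rfl⟩ hz
    obtain ⟨i, hi⟩ := Set.mem_iUnion.1 hz
    have := (convex_halfSpace_re_ge (p k).re).segment_subset (hre i) (hre (i + 1)) hi
    simp only [Set.mem_ofPred_eq, sub_re, ofReal_re] at this
    linarith [Set.mem_Ioi.1 hr]
  have hunbounded : ¬ Bornology.IsBounded ((fun r : ℝ => p k - (r : ℂ)) '' Set.Ioi 0) := fun hb =>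
    not_bddAbove_Ioi (0 : ℝ) <| Bornology.IsBounded.bddAbove <|
      ((Isometry.of_dist_eq (f := fun r : ℝ => p k - (r : ℂ)) fun r s => by
        rw [dist_sub_left, isometry_ofReal.dist_eq]).antilipschitz.isBounded_preimage hb).subset
          (Set.subset_preimage_image _ _)
  have hmem : p k - (ε / 2 : ℝ) ∈ rightSector p k ε := by
    have hεneg : -(ε / 2) < 0 := by linarith
    refine ⟨by simpa using hε.ne', by simpa [abs_of_pos hε] using hε, ?_⟩
    rw [leftAngle, sub_sub_cancel_left, ← ofReal_neg, ccwAngle_eq_arg_sub_arg he hf hle,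
      ccwAngle_eq_arg_sub_arg he (ofReal_ne_zero.2 hεneg.ne) (by
        rw [arg_ofReal_of_neg hεneg]; exact arg_le_pi _), arg_ofReal_of_neg hεneg]
    linarith [(hk (k - 1)).2, Real.pi_pos]
  refine ⟨ε, hε, disjoint_inside_of_isPreconnected (H.isPreconnected_rightSector _ _) hoff hmem ?_⟩
  exact Set.disjoint_left.1 (disjoint_inside_of_not_isBounded
    (isPreconnected_Ioi.image _ (by fun_prop)) hray hunbounded) ⟨ε / 2, by simpa using hε, rfl⟩

theorem exists_disjoint_rightSector_inside (H : IsSimplePolygon p) {k : ZMod m}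
    (hk : ∃ ε > 0, Disjoint (rightSector p k ε) (inside (carrier p))) (j : ZMod m) :
    ∃ ε > 0, Disjoint (rightSector p j ε) (inside (carrier p)) := by
  have hadd (n : ℕ) : ∃ ε > 0, Disjoint (rightSector p (k + n) ε) (inside (carrier p)) := by
    induction n with
    | zero => simpa using hk
    | succ n ih => simpa [add_assoc] using H.exists_disjoint_rightSector_inside_succ ih
  simpa using hadd (j - k).val

end IsSimplePolygon

/-- A closed polygon is positively oriented if it turns once counterclockwise and its bounded side
lies on its left, that is, no right-hand sector contains inside points near its corner. -/
structure PositivelyOriented {m : ℕ} [NeZero m] (p : ZMod m → ℂ) : Prop where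
  sum_pi_sub_leftAngle : ∑ i, (Real.pi - leftAngle p i) = 2 * Real.pi
  exists_disjoint_rightSector_inside (j : ZMod m) :
    ∃ ε > 0, Disjoint (rightSector p j ε) (inside (carrier p))

theorem carrier_comp_neg {m : ℕ} (p : ZMod m → ℂ) : carrier (fun i => p (-i)) = carrier p := by
  let f : ZMod m ≃ ZMod m := (Equiv.neg _).trans (Equiv.subRight 1)
  refine Set.iUnion_congr_of_surjective f f.surjective fun i => ?_
  simp only [f, Equiv.trans_apply, Equiv.neg_apply, Equiv.subRight_apply]
  rw [sub_add_cancel, segment_symm, neg_add, sub_eq_add_neg]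

namespace IsSimplePolygon
variable {m : ℕ} {p : ZMod m → ℂ}

theorem comp_neg (H : IsSimplePolygon p) : IsSimplePolygon fun i => p (-i) := by
  -- a half-open edge traversed backwards is a half-open edge up to moving one endpoint
  have exists_reverse_param (i : ZMod m) {s : ℝ} (hs : s ∈ Set.Ico 0 1) :
      ∃ k, ∃ t ∈ Set.Ico (0 : ℝ) 1,
        (s = 0 ∧ t = 0 ∧ k = -i ∨ 0 < s ∧ t = 1 - s ∧ k = -(i + 1)) ∧
          AffineMap.lineMap (p k) (p (k + 1)) t = AffineMap.lineMap (p (-i)) (p (-(i + 1))) s := by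
    rcases hs.1.eq_or_lt with rfl | h0
    · exact ⟨-i, 0, hs, by simp, by simp⟩
    · refine ⟨-(i + 1), 1 - s, ⟨by linarith [hs.2], by linarith⟩, Or.inr ⟨h0, rfl, rfl⟩, ?_⟩
      rw [AffineMap.lineMap_apply_one_sub, neg_add, neg_add_cancel_right]
  intro i j s t hs ht h
  obtain ⟨k, s', hs', hk, hks⟩ := exists_reverse_param i hs
  obtain ⟨l, t', ht', hl, hlt⟩ := exists_reverse_param j ht
  obtain ⟨rfl, hst⟩ := H hs' ht' (by rw [hks, hlt]; exact h)
  rcases hk with ⟨rfl, rfl, rfl⟩ | ⟨_, rfl, rfl⟩ <;>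
    rcases hl with ⟨rfl, rfl, hij⟩ | ⟨_, rfl, hij⟩
  · exact ⟨neg_injective hij, rfl⟩
  · linarith [ht.2]
  · linarith [hs.2]
  · exact ⟨add_right_cancel (neg_injective hij), by linarith⟩

variable [NeZero m]

theorem positivelyOriented_of_forall_arg (H : IsSimplePolygon p) {k : ZMod m}
    (hk : ∀ i, arg (p i - p k) ∈ Set.Ioc (-(Real.pi / 2)) (Real.pi / 2))
    (hle : arg (p (k + 1) - p k) ≤ arg (p (k - 1) - p k)) : PositivelyOriented p where
  sum_pi_sub_leftAngle := H.sum_pi_sub_leftAngle hk hle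
  exists_disjoint_rightSector_inside := H.exists_disjoint_rightSector_inside
    (H.exists_disjoint_rightSector_inside_of_forall_arg hk hle)

theorem positivelyOriented_or_comp_neg (H : IsSimplePolygon p) :
    PositivelyOriented p ∨ PositivelyOriented fun i => p (-i) := by
  obtain ⟨k, hk⟩ := exists_forall_arg_sub_mem_Ioc p
  rcases le_total (arg (p (k + 1) - p k)) (arg (p (k - 1) - p k)) with hle | hle
  · exact Or.inl (H.positivelyOriented_of_forall_arg hk hle)
  · refine Or.inr (H.comp_neg.positivelyOriented_of_forall_arg (k := -k) (fun i => ?_) ?_)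
    · simpa using hk (-i)
    · rw [neg_neg, neg_add, neg_neg, neg_sub, sub_neg_eq_add, ← sub_eq_add_neg, add_comm 1 k]
      exact hle

end IsSimplePolygon

/-! ### Octilinear directions -/

/-- A nonzero vector in one of the eight octilinear directions, which are encoded by `ZMod 8`: the
unit vector at angle `d * π / 4` is `ZMod.stdAddChar d`. -/
def IsOctilinear (z : ℂ) : Prop := ∃ r : ℝ, 0 < r ∧ ∃ d : ZMod 8, z = r * ZMod.stdAddChar d

theorem stdAddChar_eq_exp (d : ZMod 8) :
    (ZMod.stdAddChar d : ℂ) = exp ((Real.pi / 4 * d.val : ℝ) * I) := by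
  obtain ⟨n, rfl⟩ : ∃ n : ℕ, (n : ZMod 8) = d := ⟨d.val, ZMod.natCast_zmod_val d⟩
  have := ZMod.stdAddChar_coe (N := 8) ((n : ZMod 8).val : ℤ)
  rw [Int.cast_natCast, ZMod.natCast_zmod_val] at this
  rw [this]
  congr 1
  push_cast
  ring

theorem stdAddChar_two : (ZMod.stdAddChar (2 : ZMod 8) : ℂ) = I := by
  rw [stdAddChar_eq_exp, show (2 : ZMod 8).val = 2 from rfl,
    show Real.pi / 4 * (2 : ℕ) = Real.pi / 2 by push_cast; ring]
  push_cast
  exact exp_pi_div_two_mul_I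

theorem stdAddChar_four : (ZMod.stdAddChar (4 : ZMod 8) : ℂ) = -1 := by
  rw [show (4 : ZMod 8) = 2 + 2 from rfl, AddChar.map_add_eq_mul, stdAddChar_two, I_mul_I]

theorem sqrt_two_mul_stdAddChar_one : Real.sqrt 2 * (ZMod.stdAddChar (1 : ZMod 8) : ℂ) = 1 + I := by
  have hsqrt : (Real.sqrt 2 : ℂ) * Real.sqrt 2 = 2 := by
    exact_mod_cast Real.mul_self_sqrt (by norm_num : (0 : ℝ) ≤ 2)
  rw [stdAddChar_eq_exp, show (1 : ZMod 8).val = 1 from rfl, Nat.cast_one, mul_one, exp_mul_I,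
    ← ofReal_cos, ← ofReal_sin, Real.cos_pi_div_four, Real.sin_pi_div_four]
  push_cast
  linear_combination (1 + I) / 2 * hsqrt

theorem isOctilinear_of_eq_mul {z : ℂ} (hz : z ≠ 0) {r : ℝ} {d : ZMod 8}
    (h : z = r * ZMod.stdAddChar d) : IsOctilinear z := by
  rcases lt_trichotomy r 0 with hr | rfl | hr
  · refine ⟨-r, neg_pos.2 hr, d + 4, ?_⟩
    rw [AddChar.map_add_eq_mul, stdAddChar_four, h]
    push_cast
    ring
  · simp [h] at hz
  · exact ⟨r, hr, d, h⟩

theorem isOctilinear_of_im_re {z : ℂ} (hz : z ≠ 0)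
    (h : z.im = 0 ∨ z.re = 0 ∨ z.im = z.re ∨ z.im = -z.re) : IsOctilinear z := by
  rcases h with h | h | h | h
  · exact isOctilinear_of_eq_mul hz (r := z.re) (d := 0) (by
      rw [AddChar.map_zero_eq_one, mul_one, ← ofReal_re z.re]; apply Complex.ext <;> simp [h])
  · exact isOctilinear_of_eq_mul hz (r := z.im) (d := 2) (by
      rw [stdAddChar_two]; apply Complex.ext <;> simp [h])
  · exact isOctilinear_of_eq_mul hz (r := z.re * Real.sqrt 2) (d := 1) (by
      rw [ofReal_mul, mul_assoc, sqrt_two_mul_stdAddChar_one]; apply Complex.ext <;> simp [h])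
  · exact isOctilinear_of_eq_mul hz (r := -z.re * Real.sqrt 2) (d := 1 + 2) (by
      rw [AddChar.map_add_eq_mul, stdAddChar_two, ← mul_assoc, ofReal_mul, mul_assoc (ofReal _),
        sqrt_two_mul_stdAddChar_one]
      apply Complex.ext <;> simp [h])

theorem IsOctilinear.neg {z : ℂ} (h : IsOctilinear z) : IsOctilinear (-z) := by
  obtain ⟨r, hr, d, rfl⟩ := h
  refine ⟨r, hr, d + 4, ?_⟩
  rw [AddChar.map_add_eq_mul, stdAddChar_four]
  ring

theorem ccwAngle_stdAddChar {w : ℂ} {r : ℝ} {d : ZMod 8} (hr : 0 < r)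
    (hw : w = r * ZMod.stdAddChar d) (e : ZMod 8) :
    ccwAngle w (ZMod.stdAddChar e) = Real.pi / 4 * (e - d).val := by
  have hval : ((e - d).val : ℝ) ≤ 7 := by exact_mod_cast Nat.le_of_lt_succ (ZMod.val_lt (e - d))
  refine ccwAngle_eq (r := r⁻¹) ?_ (inv_pos.2 hr)
    ⟨by positivity, by nlinarith [Real.pi_pos]⟩ ?_
  · rw [hw]
    exact mul_ne_zero (ofReal_ne_zero.2 hr.ne') (AddChar.val_isUnit _ _).ne_zero
  · rw [← stdAddChar_eq_exp, hw, ← mul_assoc, mul_right_comm _ _ (r : ℂ), mul_assoc,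
      ← AddChar.map_add_eq_mul, sub_add_cancel, ← ofReal_mul, inv_mul_cancel₀ hr.ne', ofReal_one,
      one_mul]

theorem eventually_add_mul_mem_openSegment {a b u : ℂ} {r : ℝ} (hr : 0 < r) (h : b - a = r * u) :
    ∀ᶠ ρ : ℝ in 𝓝[>] 0, a + ρ * u ∈ openSegment ℝ a b := by
  filter_upwards [Ioo_mem_nhdsGT hr] with ρ hρ
  rw [openSegment_eq_image']
  refine ⟨ρ / r, ⟨div_pos hρ.1 hr, (div_lt_one hr).2 hρ.2⟩, ?_⟩
  dsimp only
  rw [h, real_smul, ← mul_assoc, ← ofReal_mul, div_mul_cancel₀ _ hr.ne']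

/-- The octilinear directions in which one can start from `z` into the inside of `K`. -/
def inwardDirections (K : Set ℂ) (z : ℂ) : Set (ZMod 8) :=
  {d | ∀ᶠ ρ : ℝ in 𝓝[>] 0, z + ρ * ZMod.stdAddChar d ∈ inside K}

theorem mem_inwardDirections {K : Set ℂ} {z : ℂ} {d : ZMod 8} : d ∈ inwardDirections K z ↔
    ∀ᶠ ρ : ℝ in 𝓝[>] 0, z + ρ * ZMod.stdAddChar d ∈ inside K := Iff.rfl

theorem notMem_inwardDirections_of_openSegment_subset {K : Set ℂ} {z w : ℂ} {r : ℝ} {d : ZMod 8}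
    (hr : 0 < r) (h : w - z = r * ZMod.stdAddChar d) (hK : openSegment ℝ z w ⊆ K) :
    d ∉ inwardDirections K z := fun hd => by
  obtain ⟨ρ, hin, hseg⟩ :=
    ((mem_inwardDirections.1 hd).and (eventually_add_mul_mem_openSegment hr h)).exists
  exact hin.1 (hK hseg)

theorem leftAngle_eq_of_octilinear {m : ℕ} {p : ZMod m → ℂ} {j : ZMod m} {d₀ d₁ : ZMod 8}
    {r₀ r₁ : ℝ} (hr₀ : 0 < r₀) (hr₁ : 0 < r₁) (h₀ : p (j + 1) - p j = r₀ * ZMod.stdAddChar d₀)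
    (h₁ : p (j - 1) - p j = r₁ * ZMod.stdAddChar d₁) :
    leftAngle p j = Real.pi / 4 * (d₁ - d₀).val := by
  rw [leftAngle, h₁, ccwAngle_real_mul_right hr₁, ccwAngle_stdAddChar hr₀ h₀]

namespace PositivelyOriented
variable {m : ℕ} [NeZero m] {p : ZMod m → ℂ}

theorem val_sub_mem_Ioo_of_mem_inwardDirections (P : PositivelyOriented p) {j : ZMod m}
    {d₀ d₁ d : ZMod 8} {r₀ r₁ : ℝ} (hr₀ : 0 < r₀) (hr₁ : 0 < r₁)
    (h₀ : p (j + 1) - p j = r₀ * ZMod.stdAddChar d₀)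
    (h₁ : p (j - 1) - p j = r₁ * ZMod.stdAddChar d₁)
    (hd : d ∈ inwardDirections (carrier p) (p j)) :
    (d - d₀).val ∈ Set.Ioo 0 (d₁ - d₀).val := by
  have hne₀ : d ≠ d₀ := by
    rintro rfl
    exact notMem_inwardDirections_of_openSegment_subset hr₀ h₀
      ((openSegment_subset_segment ℝ _ _).trans (Set.subset_iUnion_of_subset j subset_rfl)) hd
  have hne₁ : d ≠ d₁ := by
    rintro rfl
    refine notMem_inwardDirections_of_openSegment_subset hr₁ h₁
      ((openSegment_subset_segment ℝ _ _).trans (Set.subset_iUnion_of_subset (j - 1) ?_)) hd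
    rw [sub_add_cancel, segment_symm]
  have hle : (d - d₀).val ≤ (d₁ - d₀).val := by
    by_contra! hlt
    obtain ⟨ε, hε, hright⟩ := P.exists_disjoint_rightSector_inside j
    have hsmall : ∀ᶠ ρ : ℝ in 𝓝[>] 0, ρ ∈ Set.Ioo 0 ε := Ioo_mem_nhdsGT hε
    obtain ⟨ρ, hin, hρ⟩ := ((mem_inwardDirections.1 hd).and hsmall).exists
    refine Set.disjoint_left.1 hright ⟨?_, ?_, ?_⟩ hin
    · simpa [(AddChar.val_isUnit _ _).ne_zero] using hρ.1.ne'
    · simpa [abs_of_pos hρ.1] using hρ.2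
    · rw [add_sub_cancel_left, ccwAngle_real_mul_right hρ.1, ccwAngle_stdAddChar hr₀ h₀,
        leftAngle_eq_of_octilinear hr₀ hr₁ h₀ h₁]
      gcongr
  refine ⟨Nat.pos_of_ne_zero fun h => hne₀ (sub_eq_zero.1 ((ZMod.val_eq_zero _).1 h)),
    hle.lt_of_ne fun h => hne₁ (sub_left_injective (ZMod.val_injective 8 h))⟩

theorem pi_div_four_mul_ncard_inwardDirections_le_leftAngle (P : PositivelyOriented p)
    (H : IsSimplePolygon p) (hocti : ∀ i, IsOctilinear (p (i + 1) - p i)) (j : ZMod m) :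
    Real.pi / 4 * ((inwardDirections (carrier p) (p j)).ncard + 1) ≤ leftAngle p j := by
  obtain ⟨r₀, hr₀, d₀, h₀⟩ := hocti j
  obtain ⟨r₁, hr₁, d₁, h₁⟩ : IsOctilinear (p (j - 1) - p j) := by
    simpa using (hocti (j - 1)).neg
  have hangle := leftAngle_eq_of_octilinear hr₀ hr₁ h₀ h₁
  have hcard := Set.ncard_le_ncard_of_injOn (t := ↑(Finset.Ioo 0 (d₁ - d₀).val))
    (fun d : ZMod 8 => (d - d₀).val)
    (fun d hd => Finset.mem_coe.2 <| Finset.mem_Ioo.2 <|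
      P.val_sub_mem_Ioo_of_mem_inwardDirections hr₀ hr₁ h₀ h₁ hd)
    ((ZMod.val_injective 8).comp sub_left_injective).injOn
  rw [Set.ncard_coe_finset, Nat.card_Ioo] at hcard
  have hpos : 0 < (d₁ - d₀).val := by
    have := H.leftAngle_pos j
    rw [hangle] at this
    exact_mod_cast pos_of_mul_pos_right this (by positivity)
  rw [hangle]
  gcongr
  exact_mod_cast (by omega : _ + 1 ≤ (d₁ - d₀).val)

theorem sum_ncard_inwardDirections_add_eight_le (P : PositivelyOriented p)
    (H : IsSimplePolygon p) (hocti : ∀ i, IsOctilinear (p (i + 1) - p i)) :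
    ∑ i, (inwardDirections (carrier p) (p i)).ncard + 8 ≤ 3 * m := by
  have hsum := Finset.sum_le_sum fun i (_ : i ∈ Finset.univ) =>
    P.pi_div_four_mul_ncard_inwardDirections_le_leftAngle H hocti i
  have hturn := P.sum_pi_sub_leftAngle
  rw [← Finset.mul_sum, Finset.sum_add_distrib] at hsum
  rw [Finset.sum_sub_distrib] at hturn
  simp only [Finset.sum_const, Finset.card_univ, ZMod.card, nsmul_eq_mul, mul_one] at hsum hturn
  have hreal : (∑ i, ((inwardDirections (carrier p) (p i)).ncard : ℝ)) + 8 ≤ 3 * m :=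
    le_of_mul_le_mul_left (by linarith) Real.pi_pos
  exact_mod_cast hreal

end PositivelyOriented

theorem IsSimplePolygon.sum_ncard_inwardDirections_add_eight_le {m : ℕ} [NeZero m]
    {p : ZMod m → ℂ} (H : IsSimplePolygon p) (hocti : ∀ i, IsOctilinear (p (i + 1) - p i)) :
    ∑ i, (inwardDirections (carrier p) (p i)).ncard + 8 ≤ 3 * m := by
  rcases H.positivelyOriented_or_comp_neg with P | P
  · exact P.sum_ncard_inwardDirections_add_eight_le H hocti
  · have hle := P.sum_ncard_inwardDirections_add_eight_le H.comp_neg fun i => by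
      have hneg := (hocti (-(i + 1))).neg
      rwa [neg_sub, neg_add, neg_add_cancel_right, ← neg_add] at hneg
    rw [carrier_comp_neg] at hle
    exact (Equiv.sum_comp (Equiv.neg (ZMod m)) fun i =>
      (inwardDirections (carrier p) (p i)).ncard) ▸ hle

/-! ### Octilinear arcs -/

/-- The polygonal curve through the points `Q 0, …, Q n`, without its end `Q n`. -/
def arcCarrier (n : ℕ) (Q : ℕ → ℂ) : Set ℂ :=
  ⋃ l < n, AffineMap.lineMap (Q l) (Q (l + 1)) '' Set.Ico (0 : ℝ) 1

/-- The polygonal curve through `Q 0, …, Q n` has octilinear segments and, except that its end `Q n`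
may lie on it, is simple. Leaving out the end makes arcs that follow one another disjoint, and it
allows closed curves. -/
structure IsOctilinearArc (n : ℕ) (Q : ℕ → ℂ) : Prop where
  octilinear : ∀ l < n, IsOctilinear (Q (l + 1) - Q l)
  eq_and_eq : ∀ ⦃l l' : ℕ⦄ ⦃s t : ℝ⦄, l < n → l' < n → s ∈ Set.Ico 0 1 → t ∈ Set.Ico 0 1 →
    AffineMap.lineMap (Q l) (Q (l + 1)) s = AffineMap.lineMap (Q l') (Q (l' + 1)) t → l = l' ∧ s = t

theorem mem_arcCarrier {n : ℕ} {Q : ℕ → ℂ} {z : ℂ} : z ∈ arcCarrier n Q ↔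
    ∃ l < n, ∃ t ∈ Set.Ico (0 : ℝ) 1, AffineMap.lineMap (Q l) (Q (l + 1)) t = z := by
  simp only [arcCarrier, Set.mem_iUnion, Set.mem_image, exists_prop]

theorem corner_mem_arcCarrier {n l : ℕ} (Q : ℕ → ℂ) (hl : l < n) : Q l ∈ arcCarrier n Q :=
  mem_arcCarrier.2 ⟨l, hl, 0, by simp, AffineMap.lineMap_apply_zero _ _⟩

theorem arcCarrier_succ (n : ℕ) (Q : ℕ → ℂ) : arcCarrier (n + 1) Q =
    arcCarrier n Q ∪ AffineMap.lineMap (Q n) (Q (n + 1)) '' Set.Ico (0 : ℝ) 1 :=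
  Set.biUnion_lt_succ _ _

theorem isPreconnected_insert_arcCarrier (n : ℕ) (Q : ℕ → ℂ) :
    IsPreconnected (insert (Q n) (arcCarrier n Q)) := by
  induction n with
  | zero => simpa [arcCarrier] using isPreconnected_singleton
  | succ n ih =>
    have hunion := ih.union (Q n) (Set.mem_insert _ _) (left_mem_segment ℝ _ (Q (n + 1)))
      (convex_segment _ _).isPreconnected
    convert hunion using 1
    rw [arcCarrier_succ, segment_eq_image_lineMap, ← Set.Ico_union_right zero_le_one,
      Set.image_union, Set.image_singleton, AffineMap.lineMap_apply_one]
    have hstart : Q n ∈ AffineMap.lineMap (Q n) (Q (n + 1)) '' Set.Ico (0 : ℝ) 1 :=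
      ⟨0, by simp, AffineMap.lineMap_apply_zero _ _⟩
    ext z
    simp only [Set.mem_insert_iff, Set.mem_union, Set.mem_singleton_iff]
    grind

theorem isPreconnected_arcCarrier (n : ℕ) (Q : ℕ → ℂ) : IsPreconnected (arcCarrier n Q) := by
  cases n with
  | zero => simpa [arcCarrier] using isPreconnected_empty
  | succ n =>
    have hstart : Q n ∈ AffineMap.lineMap (Q n) (Q (n + 1)) '' Set.Ico (0 : ℝ) 1 :=
      ⟨0, by simp, AffineMap.lineMap_apply_zero _ _⟩
    have hunion := (isPreconnected_insert_arcCarrier n Q).union (Q n) (Set.mem_insert _ _) hstart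
      (isPreconnected_Ico.image _ AffineMap.lineMap_continuous.continuousOn)
    rwa [Set.insert_union, Set.insert_eq_of_mem (Set.mem_union_right _ hstart),
      ← arcCarrier_succ] at hunion

/-- The corners `Q 0, …, Q n = Q' 0, Q' 1, …` of two arcs traversed one after the other. -/
def arcConcat (n : ℕ) (Q Q' : ℕ → ℂ) (l : ℕ) : ℂ := if l < n then Q l else Q' (l - n)

section arcConcat
variable {n n' : ℕ} {Q Q' : ℕ → ℂ}

theorem arcConcat_add (l : ℕ) : arcConcat n Q Q' (n + l) = Q' l := by simp [arcConcat]

theorem arcConcat_of_le (h : Q n = Q' 0) {l : ℕ} (hl : l ≤ n) : arcConcat n Q Q' l = Q l := by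
  rcases hl.lt_or_eq with hl | rfl
  · exact if_pos hl
  · rw [h]; exact arcConcat_add 0

theorem arcConcat_eq_and_arcConcat_succ_eq (h : Q n = Q' 0) {l : ℕ} (hl : l < n + n') :
    (l < n ∧ arcConcat n Q Q' l = Q l ∧ arcConcat n Q Q' (l + 1) = Q (l + 1)) ∨
      ∃ k < n', l = n + k ∧ arcConcat n Q Q' l = Q' k ∧ arcConcat n Q Q' (l + 1) = Q' (k + 1) := by
  rcases lt_or_ge l n with hln | hln
  · exact Or.inl ⟨hln, arcConcat_of_le h hln.le, arcConcat_of_le h hln⟩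
  · obtain ⟨k, rfl⟩ := Nat.exists_eq_add_of_le hln
    exact Or.inr ⟨k, by omega, rfl, arcConcat_add k, arcConcat_add (k + 1)⟩

theorem arcCarrier_arcConcat (h : Q n = Q' 0) :
    arcCarrier (n + n') (arcConcat n Q Q') = arcCarrier n Q ∪ arcCarrier n' Q' := by
  ext z
  simp only [Set.mem_union, mem_arcCarrier]
  constructor
  · rintro ⟨l, hl, t, ht, rfl⟩
    rcases arcConcat_eq_and_arcConcat_succ_eq h hl with ⟨hl, e, e'⟩ | ⟨k, hk, rfl, e, e'⟩
    · exact Or.inl ⟨l, hl, t, ht, by rw [e, e']⟩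
    · exact Or.inr ⟨k, hk, t, ht, by rw [e, e']⟩
  · rintro (⟨l, hl, t, ht, rfl⟩ | ⟨l, hl, t, ht, rfl⟩)
    · exact ⟨l, by omega, t, ht, by rw [arcConcat_of_le h hl.le, arcConcat_of_le h hl]⟩
    · exact ⟨n + l, by omega, t, ht, by rw [add_assoc, arcConcat_add, arcConcat_add]⟩

theorem IsOctilinearArc.arcConcat (A : IsOctilinearArc n Q) (A' : IsOctilinearArc n' Q')
    (h : Q n = Q' 0) (hdisj : Disjoint (arcCarrier n Q) (arcCarrier n' Q')) :
    IsOctilinearArc (n + n') (arcConcat n Q Q') where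
  octilinear l hl := by
    rcases arcConcat_eq_and_arcConcat_succ_eq h hl with ⟨hl, e, e'⟩ | ⟨k, hk, rfl, e, e'⟩
    · rw [e, e']; exact A.octilinear l hl
    · rw [e, e']; exact A'.octilinear k hk
  eq_and_eq l l' s t hl hl' hs ht hst := by
    have hcross {k k' : ℕ} {s t : ℝ} (hk : k < n) (hk' : k' < n') (hs : s ∈ Set.Ico 0 1)
        (ht : t ∈ Set.Ico 0 1) : AffineMap.lineMap (Q k) (Q (k + 1)) s ≠
          AffineMap.lineMap (Q' k') (Q' (k' + 1)) t := fun hst =>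
      Set.disjoint_left.1 hdisj (mem_arcCarrier.2 ⟨k, hk, s, hs, rfl⟩)
        (mem_arcCarrier.2 ⟨k', hk', t, ht, hst.symm⟩)
    rcases arcConcat_eq_and_arcConcat_succ_eq h hl with ⟨hl, e, e'⟩ | ⟨k, hk, rfl, e, e'⟩ <;>
      rcases arcConcat_eq_and_arcConcat_succ_eq h hl' with ⟨hl', f, f'⟩ | ⟨k', hk', rfl, f, f'⟩ <;>
      rw [e, e', f, f'] at hst
    · exact A.eq_and_eq hl hl' hs ht hst
    · exact absurd hst (hcross hl hk' hs ht)
    · exact absurd hst.symm (hcross hl' hk ht hs)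
    · obtain ⟨rfl, rfl⟩ := A'.eq_and_eq hk hk' hs ht hst
      exact ⟨rfl, rfl⟩

end arcConcat

namespace IsOctilinearArc
variable {n : ℕ} {Q : ℕ → ℂ}

theorem openSegment_subset (A : IsOctilinearArc n Q) (hn : 0 < n) :
    openSegment ℝ (Q 0) (Q 1) ⊆ arcCarrier n Q \ {Q 0} := by
  rw [openSegment_eq_image_lineMap]
  rintro _ ⟨t, ht, rfl⟩
  refine ⟨mem_arcCarrier.2 ⟨0, hn, t, ⟨ht.1.le, ht.2⟩, rfl⟩, fun h => ht.1.ne' ?_⟩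
  exact (A.eq_and_eq hn hn ⟨ht.1.le, ht.2⟩ (by simp)
    (h.trans (AffineMap.lineMap_apply_zero _ _).symm)).2

end IsOctilinearArc

theorem exists_zmod_forall_natCast_eq {n : ℕ} [NeZero n] {Q : ℕ → ℂ} (hclosed : Q n = Q 0) :
    ∃ p : ZMod n → ℂ, ∀ l ≤ n, p l = Q l := by
  refine ⟨fun i => Q i.val, fun l hl => ?_⟩
  dsimp only
  rw [ZMod.val_natCast]
  rcases hl.lt_or_eq with h | rfl
  · rw [Nat.mod_eq_of_lt h]
  · rw [Nat.mod_self, hclosed]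

section closing
variable {n : ℕ} [NeZero n] {Q : ℕ → ℂ} {p : ZMod n → ℂ}

theorem exists_lt_and_corners_eq (hp : ∀ l ≤ n, p l = Q l) (i : ZMod n) :
    ∃ l < n, (l : ZMod n) = i ∧ p i = Q l ∧ p (i + 1) = Q (l + 1) := by
  have hcast := ZMod.natCast_zmod_val i
  have hlt := ZMod.val_lt i
  refine ⟨i.val, hlt, hcast, ?_, ?_⟩
  · rw [← hp _ hlt.le, hcast]
  · rw [← hp _ hlt, Nat.cast_succ, hcast]

theorem carrier_eq_arcCarrier (hp : ∀ l ≤ n, p l = Q l) : carrier p = arcCarrier n Q := by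
  ext z
  rw [mem_carrier_iff, mem_arcCarrier]
  constructor
  · rintro ⟨i, t, ht, rfl⟩
    obtain ⟨l, hl, -, e, e'⟩ := exists_lt_and_corners_eq hp i
    exact ⟨l, hl, t, ht, by rw [e, e']⟩
  · rintro ⟨l, hl, t, ht, rfl⟩
    exact ⟨l, t, ht, by rw [hp l hl.le, ← hp (l + 1) hl, Nat.cast_succ]⟩

theorem IsOctilinearArc.isSimplePolygon (A : IsOctilinearArc n Q) (hp : ∀ l ≤ n, p l = Q l) :
    IsSimplePolygon p := fun i j s t hs ht hst => by
  obtain ⟨l, hl, rfl, e, e'⟩ := exists_lt_and_corners_eq hp i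
  obtain ⟨l', hl', rfl, f, f'⟩ := exists_lt_and_corners_eq hp j
  rw [e, e', f, f'] at hst
  obtain ⟨rfl, rfl⟩ := A.eq_and_eq hl hl' hs ht hst
  exact ⟨rfl, rfl⟩

theorem IsOctilinearArc.isOctilinear_sub (A : IsOctilinearArc n Q) (hp : ∀ l ≤ n, p l = Q l)
    (i : ZMod n) : IsOctilinear (p (i + 1) - p i) := by
  obtain ⟨l, hl, -, e, e'⟩ := exists_lt_and_corners_eq hp i
  rw [e, e']
  exact A.octilinear l hl

end closing

/-- The curve `γ` runs through the points `Q 0, …, Q n`, in unit time along each segment. -/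
def Traverses (γ : ℝ → ℂ) (n : ℕ) (Q : ℕ → ℂ) : Prop :=
  ∀ l < n, ∀ t ∈ Set.Icc (0 : ℝ) 1, γ (l + t) = AffineMap.lineMap (Q l) (Q (l + 1)) t

namespace Traverses
variable {γ : ℝ → ℂ} {n : ℕ} {Q : ℕ → ℂ}

theorem reverse (T : Traverses γ n Q) :
    Traverses (fun s => γ (n - s)) n fun l => Q (n - l) := fun l hl t ht => by
  obtain ⟨k, rfl⟩ := Nat.exists_eq_add_of_lt hl
  have hT := T k (by omega) (1 - t) ⟨by linarith [ht.2], by linarith [ht.1]⟩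
  rw [AffineMap.lineMap_apply_one_sub] at hT
  dsimp only
  rw [show l + k + 1 - l = k + 1 by omega, show l + k + 1 - (l + 1) = k by omega, ← hT]
  push_cast
  ring_nf

theorem apply_zero (T : Traverses γ n Q) (hn : 0 < n) : γ 0 = Q 0 := by
  simpa using T 0 hn 0 (by simp)

theorem apply_last (T : Traverses γ n Q) (hn : 0 < n) : γ n = Q n := by
  simpa using T.reverse.apply_zero hn

theorem isOctilinearArc (T : Traverses γ n Q) (hγ : Set.InjOn γ (Set.Icc 0 n))
    (hocti : ∀ l < n, IsOctilinear (Q (l + 1) - Q l)) : IsOctilinearArc n Q := by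
  refine ⟨hocti, fun l l' s t hl hl' hs ht hst => ?_⟩
  have hmem {l : ℕ} {t : ℝ} (hl : l < n) (ht : t ∈ Set.Ico 0 1) : (l + t : ℝ) ∈ Set.Icc (0 : ℝ) n :=
    ⟨by linarith [ht.1, l.cast_nonneg (α := ℝ)], by
      have : (l + 1 : ℝ) ≤ n := by exact_mod_cast hl
      linarith [ht.2]⟩
  rw [← T l hl s (Set.Ico_subset_Icc_self hs), ← T l' hl' t (Set.Ico_subset_Icc_self ht)] at hst
  have hadd := hγ (hmem hl hs) (hmem hl' ht) hst
  have hfloor {l : ℕ} {t : ℝ} (ht : t ∈ Set.Ico 0 1) : ⌊(l + t : ℝ)⌋ = l := by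
    rw [Int.floor_natCast_add, Int.floor_eq_zero_iff.2 ht, add_zero]
  have hll : l = l' := by exact_mod_cast (hfloor hs).symm.trans (hadd ▸ hfloor ht)
  subst hll
  exact ⟨rfl, add_left_cancel hadd⟩

theorem arcCarrier_eq_image_Ico (T : Traverses γ n Q) : arcCarrier n Q = γ '' Set.Ico 0 n := by
  ext z
  rw [mem_arcCarrier]
  constructor
  · rintro ⟨l, hl, t, ht, rfl⟩
    have : (l + 1 : ℝ) ≤ n := by exact_mod_cast hl
    exact ⟨l + t, ⟨by linarith [ht.1, l.cast_nonneg (α := ℝ)], by linarith [ht.2]⟩,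
      T l hl t (Set.Ico_subset_Icc_self ht)⟩
  · rintro ⟨s, hs, rfl⟩
    have hl : ⌊s⌋₊ < n := (Nat.floor_lt hs.1).2 hs.2
    have ht : s - ⌊s⌋₊ ∈ Set.Ico (0 : ℝ) 1 :=
      ⟨sub_nonneg.2 (Nat.floor_le hs.1), by linarith [Nat.lt_floor_add_one s]⟩
    exact ⟨⌊s⌋₊, hl, _, ht, by rw [← T _ hl _ (Set.Ico_subset_Icc_self ht), add_sub_cancel]⟩

theorem arcCarrier_eq_image_Icc_diff (T : Traverses γ n Q) (hγ : Set.InjOn γ (Set.Icc 0 n))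
    (hn : 0 < n) : arcCarrier n Q = γ '' Set.Icc 0 n \ {Q n} := by
  have hlast : (n : ℝ) ∈ Set.Icc (0 : ℝ) n := Set.right_mem_Icc.2 n.cast_nonneg
  rw [T.arcCarrier_eq_image_Ico, ← T.apply_last hn, ← Set.Icc_sdiff_right,
    hγ.image_sdiff_subset (Set.singleton_subset_iff.2 hlast), Set.image_singleton]

end Traverses

/-! ### The edges of a drawing -/

/-- The identification of the plane `ℝ × ℝ` of the drawings with `ℂ`. -/
noncomputable def toComplex : (ℝ × ℝ) ≃L[ℝ] ℂ := equivRealProdCLM.symm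

theorem isOctilinear_toComplex_sub {a b : ℝ × ℝ} (hne : a ≠ b) (h : Polyline.OctiSeg a b) :
    IsOctilinear (toComplex b - toComplex a) :=
  isOctilinear_of_im_re (sub_ne_zero.2 fun heq => hne (toComplex.injective heq).symm)
    (by simpa [Polyline.OctiSeg, toComplex] using h)

/-- The corners of a polyline, as complex numbers. -/
noncomputable def corners (P : Polyline) (l : ℕ) : ℂ := toComplex (P.pt l)

theorem traverses_toComplex_param (P : Polyline) :
    Traverses (fun s => toComplex (P.param s)) P.len (corners P) := fun l _ t ht => by
  have hparam : P.param (l + t) = AffineMap.lineMap (P.pt l) (P.pt (l + 1)) t := by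
    rw [AffineMap.lineMap_apply_module', add_comm (t • _)]
    rcases ht.2.lt_or_eq with ht1 | rfl
    · have hfloor : ⌊(l : ℝ) + t⌋ = l := by
        rw [Int.floor_natCast_add, Int.floor_eq_zero_iff.2 ⟨ht.1, ht1⟩, add_zero]
      simp [Polyline.param, hfloor]
    · have hfloor : ⌊(l : ℝ) + 1⌋ = (l + 1 : ℕ) := by
        rw [Int.floor_natCast_add, Int.floor_one, Nat.cast_succ]
      simp only [Polyline.param, hfloor, Int.toNat_natCast]
      simp
  dsimp only
  rw [hparam]
  exact toComplex.toAffineEquiv.toAffineMap.apply_lineMap _ _ _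

theorem injOn_toComplex_param {P : Polyline} (hP : P.Simple) :
    Set.InjOn (fun s => toComplex (P.param s)) (Set.Icc 0 P.len) :=
  toComplex.injective.comp_injOn hP

theorem isOctilinear_corners_sub {P : Polyline} (hP : P.Octilinear) {l : ℕ} (hl : l < P.len) :
    IsOctilinear (corners P (l + 1) - corners P l) :=
  isOctilinear_toComplex_sub (hP.1.1 l hl) (hP.2 l hl)

theorem isOctilinearArc_corners {P : Polyline} (hP : P.Simple) (hocti : P.Octilinear) :
    IsOctilinearArc P.len (corners P) ∧
      arcCarrier P.len (corners P) = toComplex '' P.image \ {corners P P.len} := by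
  have T := traverses_toComplex_param P
  have hinj := injOn_toComplex_param hP
  refine ⟨T.isOctilinearArc hinj fun l hl => isOctilinear_corners_sub hocti hl, ?_⟩
  rw [T.arcCarrier_eq_image_Icc_diff hinj P.len_pos, Polyline.image, Set.image_image]

theorem isOctilinearArc_reverse_corners {P : Polyline} (hP : P.Simple) (hocti : P.Octilinear) :
    IsOctilinearArc P.len (fun l => corners P (P.len - l)) ∧
      arcCarrier P.len (fun l => corners P (P.len - l)) =
        toComplex '' P.image \ {corners P 0} := by
  have T := (traverses_toComplex_param P).reverse
  have hmaps : Set.MapsTo (fun s : ℝ => P.len - s) (Set.Icc 0 P.len) (Set.Icc 0 P.len) :=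
    fun s hs => ⟨sub_nonneg.2 hs.2, sub_le_self _ hs.1⟩
  have hinj := (injOn_toComplex_param hP).comp sub_right_injective.injOn hmaps
  refine ⟨T.isOctilinearArc hinj fun l hl => ?_, ?_⟩
  · have hneg := (isOctilinear_corners_sub hocti (l := P.len - (l + 1)) (by omega)).neg
    rwa [neg_sub, show P.len - (l + 1) + 1 = P.len - l by omega] at hneg
  · rw [T.arcCarrier_eq_image_Icc_diff hinj P.len_pos, Nat.sub_self, Polyline.image]
    have himage : (fun s : ℝ => P.len - s) '' Set.Icc 0 P.len = Set.Icc 0 (P.len : ℝ) := by simp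
    conv_rhs => rw [← himage, Set.image_image, Set.image_image]

end OctilinearDrawing

namespace OctiDrawing
open OctilinearDrawing Complex Filter Topology

variable {V : Type*} {G : SimpleGraph V} (D : OctiDrawing G)

/-- The position of a vertex, as a complex number. -/
noncomputable def place (a : V) : ℂ := toComplex (toR (D.pos a))

/-- The image in `ℂ` of the polylines of the edges in `S`. -/
noncomputable def curve (S : Set (Sym2 V)) : Set ℂ := toComplex '' edgesImage D S

theorem mem_curve {S : Set (Sym2 V)} {z : ℂ} :
    z ∈ D.curve S ↔ ∃ e ∈ S, z ∈ toComplex '' (D.poly e).image := by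
  simp only [curve, edgesImage, Set.image_iUnion, Set.mem_iUnion, exists_prop]

theorem curve_singleton (e : Sym2 V) : D.curve {e} = toComplex '' (D.poly e).image := by
  ext z; simp [mem_curve]

theorem curve_insert (e : Sym2 V) (S : Set (Sym2 V)) :
    D.curve (insert e S) = D.curve {e} ∪ D.curve S := by
  ext z; simp [mem_curve, or_and_right, exists_or]

theorem place_injective : Function.Injective D.place := fun a b hab => D.inj <| by
  simpa [toR, Prod.ext_iff] using toComplex.injective hab

theorem corners_eq_place {a b : V} (hab : G.Adj a b) :
    (corners (D.poly s(a, b)) 0 = D.place a ∧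
        corners (D.poly s(a, b)) (D.poly s(a, b)).len = D.place b) ∨
      (corners (D.poly s(a, b)) 0 = D.place b ∧
        corners (D.poly s(a, b)) (D.poly s(a, b)).len = D.place a) := by
  simpa [corners, place] using Set.pair_eq_pair_iff.1 (D.ends a b hab)

namespace IsPlanar
variable {D} (hD : D.IsPlanar)
include hD

theorem exists_isOctilinearArc {a b : V} (hab : G.Adj a b) :
    ∃ Q, IsOctilinearArc (D.poly s(a, b)).len Q ∧ Q 0 = D.place a ∧
      Q (D.poly s(a, b)).len = D.place b ∧
      arcCarrier (D.poly s(a, b)).len Q = D.curve {s(a, b)} \ {D.place b} := by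
  have hP := hD.1 _ (G.mem_edgeSet.2 hab)
  have hocti := D.octi _ (G.mem_edgeSet.2 hab)
  rw [D.curve_singleton]
  rcases D.corners_eq_place hab with ⟨h₀, h₁⟩ | ⟨h₀, h₁⟩
  · have A := isOctilinearArc_corners hP hocti
    exact ⟨_, A.1, h₀, h₁, h₁ ▸ A.2⟩
  · have A := isOctilinearArc_reverse_corners hP hocti
    exact ⟨_, A.1, h₁, by rw [Nat.sub_self, h₀], h₀ ▸ A.2⟩

theorem place_mem_curve_singleton_iff {a b c : V} (hab : G.Adj a b) :
    D.place c ∈ D.curve {s(a, b)} ↔ c ∈ s(a, b) := by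
  have hmeet := Set.ext_iff.1 (hD.2.1 a b hab) (toR (D.pos c))
  rw [curve_singleton, place, toComplex.injective.mem_set_image, Sym2.mem_iff]
  have hinj : Function.Injective fun a => toR (D.pos a) := fun a b h =>
    D.place_injective (congrArg toComplex h)
  simpa [hinj.eq_iff] using hmeet

theorem exists_place_eq {e e' : Sym2 V} (he : e ∈ G.edgeSet) (he' : e' ∈ G.edgeSet)
    (hne : e ≠ e') {z : ℂ} (hz : z ∈ D.curve {e}) (hz' : z ∈ D.curve {e'}) :
    ∃ a, a ∈ e ∧ a ∈ e' ∧ D.place a = z := by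
  rw [curve_singleton] at hz hz'
  obtain ⟨x, hx, rfl⟩ := hz
  obtain ⟨a, ⟨ha, ha'⟩, rfl⟩ := hD.2.2 e he e' he' hne
    ⟨hx, toComplex.injective.mem_set_image.1 hz'⟩
  exact ⟨a, ha, ha', rfl⟩

end IsPlanar

/-! ### Walks in a drawing -/

variable {u v : V}

/-- The number of segments that the drawing uses for a list of edges. -/
def numSegments (L : List (Sym2 V)) : ℕ := (L.map fun e => (D.poly e).len).sum

theorem numSegments_eq_sum_bends_add_length (L : List (Sym2 V)) :
    D.numSegments L = (L.map fun e => (D.poly e).bends).sum + L.length := by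
  have hlen (e : Sym2 V) : (D.poly e).len = (D.poly e).bends + 1 :=
    (Nat.sub_add_cancel (D.poly e).len_pos).symm
  simp [numSegments, hlen, List.sum_map_add]

theorem numSegments_pos_of_isCycle {C : G.Walk v v} (hC : C.IsCycle) :
    0 < D.numSegments C.edges := by
  rw [numSegments_eq_sum_bends_add_length, SimpleGraph.Walk.length_edges]
  have := hC.three_le_length
  omega

/-- `Q` lists the corners of an arc that follows the drawing of the walk `w`. As the carrier of an
arc omits its end, the place of the last vertex need not be on it. -/
structure Traces (w : G.Walk u v) (Q : ℕ → ℂ) : Prop where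
  isOctilinearArc : IsOctilinearArc (D.numSegments w.edges) Q
  start : Q 0 = D.place u
  last : Q (D.numSegments w.edges) = D.place v
  arcCarrier_subset : arcCarrier (D.numSegments w.edges) Q ⊆ D.curve {e | e ∈ w.edges}
  diff_subset_arcCarrier :
    D.curve {e | e ∈ w.edges} \ {D.place v} ⊆ arcCarrier (D.numSegments w.edges) Q
  exists_corner : ∀ a ∈ w.support, a ≠ v → ∃ l < D.numSegments w.edges, Q l = D.place a

variable {D}

theorem Traces.nil : D.Traces (.nil : G.Walk v v) fun _ => D.place v where
  isOctilinearArc :=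
    ⟨fun l hl => absurd hl l.not_lt_zero, fun l _ _ _ hl => absurd hl l.not_lt_zero⟩
  start := rfl
  last := rfl
  arcCarrier_subset := by simp [arcCarrier, numSegments]
  diff_subset_arcCarrier := by simp [curve, edgesImage]
  exists_corner := by simp

theorem Traces.cons {a : V} (hua : G.Adj u a) {w : G.Walk a v} {Q Q' : ℕ → ℂ}
    (A : IsOctilinearArc (D.poly s(u, a)).len Q) (hstart : Q 0 = D.place u)
    (hlast : Q (D.poly s(u, a)).len = D.place a)
    (hcarrier : arcCarrier (D.poly s(u, a)).len Q = D.curve {s(u, a)} \ {D.place a})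
    (T : D.Traces w Q')
    (hdisj : Disjoint (D.curve {s(u, a)} \ {D.place a})
      (arcCarrier (D.numSegments w.edges) Q')) :
    D.Traces (w.cons hua) (arcConcat (D.poly s(u, a)).len Q Q') := by
  have hjoin : Q (D.poly s(u, a)).len = Q' 0 := hlast.trans T.start.symm
  have hnum : D.numSegments (w.cons hua).edges =
    (D.poly s(u, a)).len + D.numSegments w.edges := rfl
  have hcurve : D.curve {e | e ∈ (w.cons hua).edges} =
      D.curve {s(u, a)} ∪ D.curve {e | e ∈ w.edges} := by
    rw [← curve_insert]; congr 1; ext e; simp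
  have hunion := arcCarrier_arcConcat (n' := D.numSegments w.edges) hjoin
  refine ⟨A.arcConcat T.isOctilinearArc hjoin (hcarrier ▸ hdisj), ?_, ?_, ?_, ?_, ?_⟩
  · rw [arcConcat_of_le hjoin (Nat.zero_le _), hstart]
  · rw [hnum, arcConcat_add, T.last]
  · rw [hnum, hcurve, hunion, hcarrier]
    exact Set.union_subset_union Set.sdiff_subset T.arcCarrier_subset
  · rw [hnum, hcurve, hunion, hcarrier]
    rintro z ⟨hz | hz, hzv⟩
    · by_cases hza : z = D.place a
      · obtain ⟨l, hl, hQ⟩ := T.exists_corner a w.start_mem_support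
          fun hav => hzv (hav ▸ hza)
        exact Or.inr (hza ▸ hQ ▸ corner_mem_arcCarrier Q' hl)
      · exact Or.inl ⟨hz, hza⟩
    · exact Or.inr (T.diff_subset_arcCarrier ⟨hz, hzv⟩)
  · intro b hb hbv
    rcases List.mem_cons.1 ((w.support_cons hua) ▸ hb) with rfl | hb
    · exact ⟨0, by have := (D.poly s(b, a)).len_pos; omega,
        by rw [arcConcat_of_le hjoin (Nat.zero_le _), hstart]⟩
    · obtain ⟨l, hl, hQ⟩ := T.exists_corner b hb hbv
      exact ⟨(D.poly s(u, a)).len + l, by omega, by rw [arcConcat_add, hQ]⟩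

theorem IsPlanar.exists_traces_cons (hD : D.IsPlanar) {a : V} (hua : G.Adj u a) {w : G.Walk a v}
    {Q' : ℕ → ℂ} (T : D.Traces w Q')
    (hv : D.place v ∉ arcCarrier (D.numSegments w.edges) Q')
    (hedge : s(u, a) ∉ w.edges) (hu : u ∈ w.support → u = v) :
    ∃ Q, D.Traces (w.cons hua) Q ∧ arcCarrier (D.numSegments (w.cons hua).edges) Q =
      D.curve {s(u, a)} \ {D.place a} ∪ arcCarrier (D.numSegments w.edges) Q' := by
  obtain ⟨Q, A, hstart, hlast, hcarrier⟩ := hD.exists_isOctilinearArc hua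
  refine ⟨_, T.cons hua A hstart hlast hcarrier <| Set.disjoint_left.2 ?_, ?_⟩
  · rintro z ⟨hz, hza⟩ hz'
    obtain ⟨e, he, hze⟩ := D.mem_curve.1 (T.arcCarrier_subset hz')
    obtain ⟨c, hc, hce, rfl⟩ := hD.exists_place_eq (G.mem_edgeSet.2 hua)
      (w.edges_subset_edgeSet he) (fun h => hedge (h ▸ he)) hz (D.curve_singleton e ▸ hze)
    rcases Sym2.mem_iff.1 hc with rfl | rfl
    · exact hv (hu (w.mem_support_of_mem_edges he hce) ▸ hz')
    · exact hza rfl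
  · exact hcarrier ▸ arcCarrier_arcConcat (hlast.trans T.start.symm)

theorem IsPlanar.exists_traces_of_isPath (hD : D.IsPlanar) {w : G.Walk u v} (hw : w.IsPath) :
    ∃ Q, D.Traces w Q ∧ D.place v ∉ arcCarrier (D.numSegments w.edges) Q := by
  induction w with
  | nil => exact ⟨_, .nil, by simp [arcCarrier, numSegments]⟩
  | @cons u a v hua w ih =>
    rw [SimpleGraph.Walk.cons_isPath_iff] at hw
    obtain ⟨Q', T, hv⟩ := ih hw.1
    obtain ⟨Q, T', hQ⟩ := hD.exists_traces_cons hua T hv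
      (fun he => hw.2 (w.fst_mem_support_of_mem_edges he)) fun hu => absurd hu hw.2
    refine ⟨Q, T', fun hmem => ?_⟩
    rcases hQ ▸ hmem with ⟨hve, hva⟩ | hmem
    · rcases Sym2.mem_iff.1 ((hD.place_mem_curve_singleton_iff hua).1 hve) with rfl | rfl
      · exact hw.2 w.end_mem_support
      · exact hva rfl
    · exact hv hmem

theorem IsPlanar.exists_traces_of_isCycle (hD : D.IsPlanar) {C : G.Walk v v} (hC : C.IsCycle) :
    ∃ Q, D.Traces C Q := by
  cases C with
  | nil => exact absurd rfl hC.ne_nil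
  | cons hva w =>
    rw [SimpleGraph.Walk.cons_isCycle_iff] at hC
    obtain ⟨Q', T, hv⟩ := hD.exists_traces_of_isPath hC.1
    obtain ⟨Q, T', -⟩ := hD.exists_traces_cons hva T hv hC.2 fun _ => rfl
    exact ⟨Q, T'⟩

theorem IsPlanar.exists_isSimplePolygon_carrier_eq (hD : D.IsPlanar) {C : G.Walk v v}
    (hC : C.IsCycle) : ∃ p : ZMod (D.numSegments C.edges) → ℂ, IsSimplePolygon p ∧
      (∀ i, IsOctilinear (p (i + 1) - p i)) ∧ carrier p = D.curve {e | e ∈ C.edges} ∧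
      ∀ a ∈ C.support, ∃ i, p i = D.place a := by
  have hn := D.numSegments_pos_of_isCycle hC
  have : NeZero (D.numSegments C.edges) := ⟨hn.ne'⟩
  obtain ⟨Q, T⟩ := hD.exists_traces_of_isCycle hC
  obtain ⟨p, hp⟩ := exists_zmod_forall_natCast_eq (T.last.trans T.start.symm)
  have hstart : D.place v ∈ arcCarrier (D.numSegments C.edges) Q :=
    T.start ▸ corner_mem_arcCarrier Q hn
  refine ⟨p, T.isOctilinearArc.isSimplePolygon hp, T.isOctilinearArc.isOctilinear_sub hp, ?_, ?_⟩
  · rw [carrier_eq_arcCarrier hp]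
    refine T.arcCarrier_subset.antisymm fun z hz => ?_
    by_cases hzv : z = D.place v
    · exact hzv ▸ hstart
    · exact T.diff_subset_arcCarrier ⟨hz, hzv⟩
  · intro a ha
    by_cases hav : a = v
    · exact ⟨(0 : ℕ), by rw [hp 0 (Nat.zero_le _), T.start, hav]⟩
    · obtain ⟨l, hl, hQ⟩ := T.exists_corner a ha hav
      exact ⟨l, (hp l hl.le).trans hQ⟩

/-! ### Edges drawn into the interior of a cycle -/

theorem place_mem_inside_curve {a : V} {S : Set (Sym2 V)}
    (h : toR (D.pos a) ∈ interiorOf D S) : D.place a ∈ inside (D.curve S) :=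
  image_inside_subset toComplex _ ⟨_, h, rfl⟩

/-- The edge from `a` to `b` starts at `a` in the octilinear direction `d`. -/
def LeavesAlong (D : OctiDrawing G) (a b : V) (d : ZMod 8) : Prop :=
  ∀ᶠ ρ : ℝ in 𝓝[>] 0,
    D.place a + ρ * ZMod.stdAddChar d ∈ D.curve {s(a, b)} \ {D.place a, D.place b}

namespace IsPlanar
variable (hD : D.IsPlanar)
include hD

theorem exists_leavesAlong {a b : V} (hab : G.Adj a b) : ∃ d, D.LeavesAlong a b d := by
  obtain ⟨Q, A, hstart, -, hcarrier⟩ := hD.exists_isOctilinearArc hab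
  have hlen := (D.poly s(a, b)).len_pos
  obtain ⟨r, hr, d, hd⟩ := A.octilinear 0 hlen
  refine ⟨d, (eventually_add_mul_mem_openSegment hr hd).mono fun ρ hρ => ?_⟩
  obtain ⟨hmem, hne⟩ := A.openSegment_subset hlen hρ
  rw [hcarrier] at hmem
  rw [hstart] at hmem hne
  exact ⟨hmem.1, fun h => h.elim hne hmem.2⟩

theorem eq_of_leavesAlong {a b b' : V} {d : ZMod 8} (hab : G.Adj a b) (hab' : G.Adj a b')
    (h : D.LeavesAlong a b d) (h' : D.LeavesAlong a b' d) : s(a, b) = s(a, b') := by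
  by_contra hne
  obtain ⟨ρ, hρ, hρ'⟩ := (Filter.Eventually.and h h').exists
  obtain ⟨c, hc, -, hplace⟩ := hD.exists_place_eq hab hab' hne hρ.1 hρ'.1
  refine hρ.2 ?_
  rcases Sym2.mem_iff.1 hc with rfl | rfl
  · exact Or.inl hplace.symm
  · exact Or.inr hplace.symm

theorem disjoint_curve_diff {a b : V} {S : Set (Sym2 V)} (hS : S ⊆ G.edgeSet) (hab : G.Adj a b)
    (hb : D.place b ∉ D.curve S) : Disjoint (D.curve {s(a, b)} \ {D.place a}) (D.curve S) := by
  refine Set.disjoint_left.2 fun z ⟨hz, hza⟩ hzS => ?_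
  obtain ⟨e, he, hze⟩ := D.mem_curve.1 hzS
  rw [← curve_singleton] at hze
  by_cases heq : s(a, b) = e
  · refine hb (D.mem_curve.2 ⟨e, he, ?_⟩)
    rw [← curve_singleton, ← heq, hD.place_mem_curve_singleton_iff hab]
    exact Sym2.mem_mk_right a b
  · obtain ⟨c, hc, -, rfl⟩ := hD.exists_place_eq hab (hS he) heq hz hze
    rcases Sym2.mem_iff.1 hc with rfl | rfl
    · exact hza rfl
    · exact hb hzS

theorem curve_diff_subset_inside {a b : V} {S : Set (Sym2 V)} (hS : S ⊆ G.edgeSet)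
    (hab : G.Adj a b) (hb : D.place b ∈ inside (D.curve S)) :
    D.curve {s(a, b)} \ {D.place a} ⊆ inside (D.curve S) := fun z hz => by
  obtain ⟨Q, -, -, -, hcarrier⟩ := hD.exists_isOctilinearArc hab.symm
  rw [Sym2.eq_swap] at hcarrier
  refine mem_inside_of_isPreconnected (hcarrier ▸ isPreconnected_arcCarrier _ Q)
    (hD.disjoint_curve_diff hS hab hb.1) ⟨?_, ?_⟩ hz hb
  · exact (hD.place_mem_curve_singleton_iff hab).2 (Sym2.mem_mk_right a b)
  · exact fun h => hab.ne (D.place_injective h).symm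

theorem mem_inwardDirections_of_leavesAlong {a b : V} {d : ZMod 8} {S : Set (Sym2 V)}
    (hS : S ⊆ G.edgeSet) (hab : G.Adj a b) (hb : D.place b ∈ inside (D.curve S))
    (h : D.LeavesAlong a b d) : d ∈ inwardDirections (D.curve S) (D.place a) :=
  Filter.Eventually.mono h fun _ hρ =>
    hD.curve_diff_subset_inside hS hab hb ⟨hρ.1, fun hz => hρ.2 (Or.inl hz)⟩

end IsPlanar

/-- The edges from a vertex of `C` to a vertex in the interior of `C`. -/
def inwardEdges (D : OctiDrawing G) {v : V} (C : G.Walk v v) : Set (Sym2 V) :=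
  {e ∈ G.edgeSet | ∃ a b : V, e = s(a, b) ∧ a ∈ C.support ∧
    toR (D.pos b) ∈ interiorOf D {e' | e' ∈ C.edges}}

theorem IsPlanar.exists_injective_inwardEdges (hD : D.IsPlanar) {v : V} {C : G.Walk v v} {m : ℕ}
    {p : ZMod m → ℂ} (hcarrier : carrier p = D.curve {e | e ∈ C.edges})
    (hp : ∀ a ∈ C.support, ∃ i, p i = D.place a) :
    ∃ f : D.inwardEdges C → Σ i, inwardDirections (carrier p) (p i), f.Injective := by
  have hdirection (e : D.inwardEdges C) : ∃ x : Σ i, inwardDirections (carrier p) (p i),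
      ∃ a b, (e : Sym2 V) = s(a, b) ∧ G.Adj a b ∧ p x.1 = D.place a ∧ D.LeavesAlong a b x.2 := by
    obtain ⟨_, he, a, b, rfl, ha, hb⟩ := e
    obtain ⟨i, hi⟩ := hp a ha
    obtain ⟨d, hd⟩ := hD.exists_leavesAlong he
    refine ⟨⟨i, d, ?_⟩, a, b, rfl, he, hi, hd⟩
    rw [hcarrier, hi]
    exact hD.mem_inwardDirections_of_leavesAlong (fun _ he' => C.edges_subset_edgeSet he') he
      (place_mem_inside_curve hb) hd
  choose f hf using hdirection
  refine ⟨f, fun e e' hee' => Subtype.ext ?_⟩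
  obtain ⟨a, b, he, hab, ha, hd⟩ := hf e
  obtain ⟨a', b', he', hab', ha', hd'⟩ := hf e'
  obtain rfl : a = a' := D.place_injective <| by rw [← ha, ← ha', hee']
  rw [he, he', hD.eq_of_leavesAlong hab hab' hd (hee' ▸ hd')]

theorem IsPlanar.finite_inwardEdges_and_ncard_add_eight_le (hD : D.IsPlanar) {v : V}
    {C : G.Walk v v} (hC : C.IsCycle) : (D.inwardEdges C).Finite ∧
      (D.inwardEdges C).ncard + 8 ≤ 3 * D.numSegments C.edges := by
  have : NeZero (D.numSegments C.edges) := ⟨(D.numSegments_pos_of_isCycle hC).ne'⟩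
  obtain ⟨p, H, hocti, hcarrier, hp⟩ := hD.exists_isSimplePolygon_carrier_eq hC
  obtain ⟨f, hf⟩ := hD.exists_injective_inwardEdges hcarrier hp
  refine ⟨Finite.of_injective f hf, ?_⟩
  have hcard := Nat.card_le_card_of_injective f hf
  rw [Nat.card_sigma] at hcard
  exact (Nat.add_le_add_right hcard 8).trans (H.sum_ncard_inwardDirections_add_eight_le hocti)

end OctiDrawing

theorem cycle_edges_bend_lower_bound_general {V : Type*} {G : SimpleGraph V} (D : OctiDrawing G)
    (hD : D.IsPlanar) {v : V} (C : G.Walk v v) (hC : C.IsCycle) :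
    (D.inwardEdges C).Finite ∧
      max 0 ⌈(((D.inwardEdges C).ncard : ℚ) - 3 * C.length + 8) / 3⌉ ≤
        ((C.edges.map fun e => (D.poly e).bends).sum : ℤ) := by
  obtain ⟨hfinite, hcard⟩ := hD.finite_inwardEdges_and_ncard_add_eight_le hC
  refine ⟨hfinite, max_le (Int.natCast_nonneg _) (Int.ceil_le.2 ?_)⟩
  rw [D.numSegments_eq_sum_bends_add_length, SimpleGraph.Walk.length_edges] at hcard
  rw [div_le_iff₀ three_pos, Int.cast_natCast]
  have hrat : ((D.inwardEdges C).ncard : ℚ) + 8 ≤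
      3 * (((C.edges.map fun e => (D.poly e).bends).sum : ℕ) + C.length) := by exact_mod_cast hcard
  linarith

/-- Let `Γ = D` be a planar octilinear drawing of a simple graph `G`, let
`C` be a cycle of length `k ≥ 3` in `G`, and let `σ` be the number of edges of `G` having one
endpoint on `C` whose other endpoint is drawn in the interior of `C`. Then the edges of `C`
carry in total at least `max {0, ⌈(σ - 3k + 8)/3⌉}` bends. -/
theorem cycle_edges_bend_lower_bound {V : Type*} [Fintype V] {G : SimpleGraph V}
    (D : OctiDrawing G) (hD : D.IsPlanar) {v : V} (C : G.Walk v v) (hC : C.IsCycle)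
    (k : ℕ) (hk : k = C.length) (hk3 : 3 ≤ k) (σ : ℕ)
    (hσ : σ = {e ∈ G.edgeSet | ∃ a b : V, e = s(a, b) ∧ a ∈ C.support ∧
        toR (D.pos b) ∈ interiorOf D {e' | e' ∈ C.edges}}.ncard) :
    max 0 ⌈((σ : ℚ) - 3 * k + 8) / 3⌉ ≤ ((C.edges.map fun e => (D.poly e).bends).sum : ℤ) := by
  subst hk hσ
  exact (cycle_edges_bend_lower_bound_general D hD C hC).2
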